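/- The restriction of φ_R to the center satisfies φ_R|_{Z(U(gl(m+1|n)))} = χ_{0,m|n}^{−1} ∘ τ ∘ χ_{m+1|n}. In particular, φ_R(Z(U(gl(m+1|n)))) is a subalgebra of ℂ[E] ⊗ Z(U(gl(m|n))), and the square with maps φ_R, χ_{m+1|n}, χ_{0,m|n}, τ commutes. -/

import Mathlib

set_option maxHeartbeats 1000000
set_option synthInstance.maxHeartbeats 400000

noncomputable section
open scoped TensorProduct

/-- The index set `I = {1,…,m,1̄,…,n̄}` of `gl(m|n)`; `Sum.inl` are the even
(unbarred) indices, `Sum.inr` the odd (barred) ones.  The index set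
`Î = {0} ∪ I` of `gl(m+1|n)` is realized as `Ind (m+1) n`, with `0 = Sum.inl 0`. -/
abbrev Ind (m n : ℕ) := Fin m ⊕ Fin n

/-- Parity of an index, as `0` or `1`. -/
def pI {m n : ℕ} : Ind m n → ℕ := Sum.elim (fun _ => 0) (fun _ => 1)

/-- The total order `1 < ⋯ < m < 1̄ < ⋯ < n̄` on `I` (and, with `m+1` in place of `m`,
the order `0 < 1 < ⋯ < m < 1̄ < ⋯ < n̄` on `Î`). -/
def iltI {m n : ℕ} : Ind m n → Ind m n → Prop
  | Sum.inl a, Sum.inl b => a < b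
  | Sum.inl _, Sum.inr _ => True
  | Sum.inr _, Sum.inl _ => False
  | Sum.inr a, Sum.inr b => a < b

/-- The distinguished index `0` of `Î`. -/
def z0 {m n : ℕ} : Ind (m+1) n := Sum.inl 0

/-- The inclusion `I ↪ Î`. -/
def emb {m n : ℕ} : Ind m n → Ind (m+1) n := Sum.map Fin.succ id

lemma emb_injective {m n : ℕ} : Function.Injective (emb (m := m) (n := n)) := by
  intro a b h
  cases a <;> cases b <;> simp [emb, Fin.succ_inj] at h <;> simp [h]

lemma emb_ne_z0 {m n : ℕ} (a : Ind m n) : emb a ≠ z0 := by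
  cases a <;> simp [emb, z0, Fin.succ_ne_zero]

/-- Builds a linear map out of a space with basis `α` from a function on basis vectors. -/
def mkOp {α M : Type} [AddCommGroup M] [Module ℂ M] (g : α → M) : (α →₀ ℂ) →ₗ[ℂ] M :=
  Finsupp.lsum ℂ fun x => LinearMap.toSpanSingleton ℂ M (g x)

/-- Number of odd variables occurring before position `i`. -/
def cntB {n : ℕ} (b : Fin n → Bool) (i : Fin n) : ℕ :=
  (Finset.univ.filter fun j => j < i ∧ b j = true).card

/-- Number of odd variables occurring. -/
def cntA {n : ℕ} (b : Fin n → Bool) : ℕ := (Finset.univ.filter fun j => b j = true).card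

/-- The defining (super-)commutation relations of `gl`:
`e_ij e_kl − (−1)^{(|i|+|j|)(|k|+|l|)} e_kl e_ij = δ_jk e_il − (−1)^{(|i|+|j|)(|k|+|l|)} δ_li e_kj`. -/
inductive glRel (ι : Type) (p : ι → ℕ) [DecidableEq ι] :
    FreeAlgebra ℂ (ι × ι) → FreeAlgebra ℂ (ι × ι) → Prop
  | basic (i j k l : ι) : glRel ι p
      (FreeAlgebra.ι ℂ (i, j) * FreeAlgebra.ι ℂ (k, l)
        - ((-1 : ℂ) ^ ((p i + p j) * (p k + p l))) •
            (FreeAlgebra.ι ℂ (k, l) * FreeAlgebra.ι ℂ (i, j)))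
      ((if j = k then FreeAlgebra.ι ℂ (i, l) else 0)
        - ((-1 : ℂ) ^ ((p i + p j) * (p k + p l))) •
            (if l = i then FreeAlgebra.ι ℂ (k, j) else 0))

/-- The universal enveloping superalgebra of the general linear Lie superalgebra with
index set `ι` and parity `p`, presented by generators `e_ij` and the super-commutator
relations. -/
abbrev UEA (ι : Type) (p : ι → ℕ) [DecidableEq ι] : Type := RingQuot (glRel ι p)

/-- The generator `e_ij` of `UEA ι p`. -/
def gen {ι : Type} (p : ι → ℕ) [DecidableEq ι] (i j : ι) : UEA ι p :=
  RingQuot.mkAlgHom ℂ (glRel ι p) (FreeAlgebra.ι ℂ (i, j))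

/-- Monomials `t_0^{k} t^e t̄^b` of `F = ℂ[t_0^{±1},t_1,…,t_m] ⊗ Λ_n`. -/
abbrev FMon (m n : ℕ) := ℤ × (Fin m → ℕ) × (Fin n → Bool)

/-- `F = ℂ[t_0^{±1},t_1,…,t_m] ⊗ Λ_n` as the vector space with basis the monomials. -/
abbrev FSp (m n : ℕ) : Type := FMon m n →₀ ℂ

/-- The basis monomial of `F` attached to `x`. -/
def fmono {m n : ℕ} (x : FMon m n) : FSp m n := Finsupp.single x 1

/-- Left multiplication by `t_i/t_0` for an even index `i ∈ {1,…,m}`. -/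
def opDivE {m n : ℕ} (i : Fin m) : Module.End ℂ (FSp m n) :=
  mkOp fun x => fmono (x.1 - 1, Function.update x.2.1 i (x.2.1 i + 1), x.2.2)

/-- Left multiplication by `t_ī/t_0` for an odd index `ī`. -/
def opDivO {m n : ℕ} (i : Fin n) : Module.End ℂ (FSp m n) :=
  mkOp fun x => if x.2.2 i then 0 else
    ((-1 : ℂ) ^ (cntB x.2.2 i)) • fmono (x.1 - 1, x.2.1, Function.update x.2.2 i true)

/-- The operator `t_0 ∂_0`. -/
def opPar0 {m n : ℕ} : Module.End ℂ (FSp m n) :=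
  mkOp fun x => (x.1 : ℂ) • fmono x

/-- The operator `t_0 ∂_i` for an even index `i ∈ {1,…,m}`. -/
def opParE {m n : ℕ} (i : Fin m) : Module.End ℂ (FSp m n) :=
  mkOp fun x => (x.2.1 i : ℂ) • fmono (x.1 + 1, Function.update x.2.1 i (x.2.1 i - 1), x.2.2)

/-- The operator `t_0 ∂_ī` for an odd index `ī`. -/
def opParO {m n : ℕ} (i : Fin n) : Module.End ℂ (FSp m n) :=
  mkOp fun x => if x.2.2 i then
    ((-1 : ℂ) ^ (cntB x.2.2 i)) • fmono (x.1 + 1, x.2.1, Function.update x.2.2 i false) else 0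

/-- The multiplication operators `t_i/t_0`, `i ∈ I`. -/
def opDiv {m n : ℕ} : Ind m n → Module.End ℂ (FSp m n) := Sum.elim opDivE opDivO

/-- The operators `t_0 ∂_i`, `i ∈ Î`. -/
def opPar {m n : ℕ} : Ind (m+1) n → Module.End ℂ (FSp m n) :=
  Sum.elim (Fin.cases opPar0 opParE) opParO

/-- The multiplication operators `t_i/t_0` for `i ∈ Î` (equal to `1` for `i = 0`). -/
def opDivB {m n : ℕ} : Ind (m+1) n → Module.End ℂ (FSp m n) :=
  Sum.elim (Fin.cases 1 opDivE) opDivO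

/-- The generators of `D'(m|n)`. -/
def Dgens (m n : ℕ) : Set (Module.End ℂ (FSp m n)) := Set.range opDiv ∪ Set.range opPar

/-- The superalgebra `D'(m|n)` of differential operators on `F`, i.e. the subalgebra of
operators on `F` generated by `t_i/t_0` (`i ∈ I`) and `t_0∂_i` (`i ∈ Î`). -/
def Dprime (m n : ℕ) : Subalgebra ℂ (Module.End ℂ (FSp m n)) := Algebra.adjoin ℂ (Dgens m n)

/-- `t_i/t_0` as an element of `D'(m|n)`. -/
def tdiv {m n : ℕ} (i : Ind m n) : Dprime m n :=
  ⟨opDiv i, Algebra.subset_adjoin (Or.inl ⟨i, rfl⟩)⟩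

/-- `t_0∂_i` as an element of `D'(m|n)`. -/
def tpar {m n : ℕ} (i : Ind (m+1) n) : Dprime m n :=
  ⟨opPar i, Algebra.subset_adjoin (Or.inr ⟨i, rfl⟩)⟩

/-- `t_i/t_0` for `i ∈ Î` as an element of `D'(m|n)`. -/
def tdivB {m n : ℕ} : Ind (m+1) n → Dprime m n :=
  Sum.elim (Fin.cases 1 fun i => tdiv (Sum.inl i)) fun i => tdiv (Sum.inr i)

/-- The operator `t_a∂_b = (t_a/t_0)(t_0∂_b)` of `D'(m|n)`, for `a, b ∈ Î`. -/
def tdel {m n : ℕ} (a b : Ind (m+1) n) : Dprime m n := tdivB a * tpar b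

/-- The Euler operator `E = Σ_{i∈Î} t_i∂_i ∈ D'(m|n)`. -/
def En (m n : ℕ) : Dprime m n := ∑ i : Ind (m+1) n, tdel i i

noncomputable instance instDprimeRing (m n : ℕ) : Ring (Dprime m n) :=
  @Subalgebra.toRing ℂ (Module.End ℂ (FSp m n)) inferInstance inferInstance inferInstance _

noncomputable instance instDprimeAlgebra (m n : ℕ) : Algebra ℂ (Dprime m n) :=
  @Subalgebra.algebra ℂ (Module.End ℂ (FSp m n)) inferInstance inferInstance inferInstance _

/-- The super tensor product `D'(m|n) ⊗ U(gl(m|n))`, axiomatized: an algebra `T` together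
with algebra maps `d ↦ d⊗1`, `u ↦ 1⊗u`, such that the induced linear map
`D'(m|n) ⊗_ℂ U(gl(m|n)) → T` is a linear isomorphism and such that the Koszul sign rule
`(1⊗u)(d⊗1) = (−1)^{|u||d|}(d⊗1)(1⊗u)` holds on (super-)generators. -/
structure SuperTensor (m n : ℕ) where
  T : Type
  [ringT : Ring T]
  [algT : Algebra ℂ T]
  inD : Dprime m n →ₐ[ℂ] T
  inU : UEA (Ind m n) pI →ₐ[ℂ] T
  equiv : ((Dprime m n) ⊗[ℂ] (UEA (Ind m n) pI)) ≃ₗ[ℂ] T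
  equiv_tmul : ∀ (d : Dprime m n) (u : UEA (Ind m n) pI), equiv (d ⊗ₜ u) = inD d * inU u
  comm_div : ∀ (i j k : Ind m n),
    inU (gen pI i j) * inD (tdiv k) =
      ((-1 : ℂ) ^ ((pI i + pI j) * pI k)) • (inD (tdiv k) * inU (gen pI i j))
  comm_par : ∀ (i j : Ind m n) (k : Ind (m+1) n),
    inU (gen pI i j) * inD (tpar k) =
      ((-1 : ℂ) ^ ((pI i + pI j) * pI k)) • (inD (tpar k) * inU (gen pI i j))

attribute [instance] SuperTensor.ringT SuperTensor.algT

/-- The predicate expressing that `φ : U(gl(m+1|n)) → D'(m|n) ⊗ U(gl(m|n))` is given on the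
generators `e_ab` by the formulas of Theorem 3.1 (for the central element `R`). -/
def IsPhi {m n : ℕ} (ST : SuperTensor m n) (R : ST.T)
    (φ : UEA (Ind (m+1) n) pI →ₐ[ℂ] ST.T) : Prop :=
  (∀ a b : Ind m n, φ (gen pI (emb a) (emb b)) =
      ST.inD (tdel (emb a) (emb b)) + ST.inU (gen pI a b)
        + (if a = b then ((-1 : ℂ) ^ (pI a * pI b)) • R else 0)) ∧
  (∀ a : Ind m n, φ (gen pI (emb a) z0) =
      ST.inD (tdel (emb a) z0)
        - ∑ j : Ind m n, ((-1 : ℂ) ^ (pI a * pI j)) • (ST.inD (tdiv j) * ST.inU (gen pI a j))) ∧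
  (∀ b : Ind m n, φ (gen pI z0 (emb b)) = ST.inD (tdel z0 (emb b))) ∧
  (φ (gen pI z0 z0) = ST.inD (tdel z0 z0) + R)

/-- The generating set of `U(sl(m+1|n))` inside `U(gl(m+1|n))`: the `e_ij` with `i ≠ j`
together with `e_00 − (−1)^{|a|} e_aa` for `a ∈ I`. -/
def slSet (m n : ℕ) : Set (UEA (Ind (m+1) n) pI) :=
  {x | (∃ i j : Ind (m+1) n, i ≠ j ∧ x = gen pI i j) ∨
    (∃ a : Ind m n, x = gen pI z0 z0 - ((-1 : ℂ) ^ (pI a)) • gen pI (emb a) (emb a))}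

/-- `U(sl(m+1|n))`, realized as the subalgebra of `U(gl(m+1|n))` generated by `sl(m+1|n)`. -/
def Usl (m n : ℕ) : Subalgebra ℂ (UEA (Ind (m+1) n) pI) := Algebra.adjoin ℂ (slSet m n)

lemma mem_gen_ne {m n : ℕ} {i j : Ind (m+1) n} (h : i ≠ j) : gen pI i j ∈ Usl m n :=
  Algebra.subset_adjoin (Or.inl ⟨i, j, h, rfl⟩)

lemma mem_h {m n : ℕ} (a : Ind m n) :
    gen pI z0 z0 - ((-1 : ℂ) ^ (pI a)) • gen pI (emb a) (emb a) ∈ Usl m n :=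
  Algebra.subset_adjoin (Or.inr ⟨a, rfl⟩)

/-- The predicate expressing that `ψ : U(sl(m+1|n)) → D'(m|n) ⊗ U(gl(m|n))` is given on the
generators by the formulas of Corollary 3.2 (the homomorphism `φ^s`). -/
def IsPhiS {m n : ℕ} (ST : SuperTensor m n) (ψ : Usl m n →ₐ[ℂ] ST.T) : Prop :=
  (∀ (a b : Ind m n) (h : a ≠ b),
    ψ ⟨gen pI (emb a) (emb b), mem_gen_ne fun he => h (emb_injective he)⟩ =
      ST.inD (tdel (emb a) (emb b)) + ST.inU (gen pI a b)) ∧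
  (∀ a : Ind m n, ψ ⟨gen pI (emb a) z0, mem_gen_ne (emb_ne_z0 a)⟩ =
      ST.inD (tdel (emb a) z0)
        - ∑ j : Ind m n, ((-1 : ℂ) ^ (pI a * pI j)) • (ST.inD (tdiv j) * ST.inU (gen pI a j))) ∧
  (∀ b : Ind m n, ψ ⟨gen pI z0 (emb b), mem_gen_ne (Ne.symm (emb_ne_z0 b))⟩ =
      ST.inD (tdel z0 (emb b))) ∧
  (∀ a : Ind m n, ψ ⟨gen pI z0 z0 - ((-1 : ℂ) ^ (pI a)) • gen pI (emb a) (emb a), mem_h a⟩ =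
      ST.inD (tdel (m:=m) (n:=n) z0 z0 - ((-1 : ℂ) ^ (pI a)) • tdel (emb a) (emb a))
        - ((-1 : ℂ) ^ (pI a)) • ST.inU (gen pI a a))

/-- The first Gelfand invariant `G₁ = Σ_i e_ii`. -/
def G1 (ι : Type) (p : ι → ℕ) [DecidableEq ι] [Fintype ι] : UEA ι p := ∑ i : ι, gen p i i

/-- The distinguished central element `R₁ = −(1/(m−n+1))(E⊗1 + 1⊗G₁)`. -/
def R1elt {m n : ℕ} (ST : SuperTensor m n) : ST.T :=
  -(1 / ((m : ℂ) - n + 1)) • (ST.inD (En m n) + ST.inU (G1 (Ind m n) pI))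

/-- Monomials of the `D'(m|n)`-module `F_a`: such a monomial
`t_0^{a−k_1−⋯−k_{n̄}} t_1^{k_1}⋯t_m^{k_m} t_{1̄}^{k_{1̄}}⋯t_{n̄}^{k_{n̄}}` is determined by the
exponents `(k_1,…,k_m,k_{1̄},…,k_{n̄})`. -/
abbrev FaMon (m n : ℕ) := (Fin m → ℕ) × (Fin n → Bool)

/-- The module `F_a`, as the vector space with basis its monomials. -/
abbrev FaSp (m n : ℕ) : Type := FaMon m n →₀ ℂ

/-- A basis monomial of `F_a`. -/
def amono {m n : ℕ} (x : FaMon m n) : FaSp m n := Finsupp.single x 1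

/-- The parity of a monomial of `F_a`. -/
def parM {m n : ℕ} (x : FaMon m n) : ℕ := cntA x.2

/-- The monomial `t_0^a` of `F_a`. -/
def hwMon (m n : ℕ) : FaMon m n := (fun _ => 0, fun _ => false)

/-- Multiplication by `t_i/t_0` on `F_a`, even `i`. -/
def aDivE {m n : ℕ} (i : Fin m) : Module.End ℂ (FaSp m n) :=
  mkOp fun x => amono (Function.update x.1 i (x.1 i + 1), x.2)

/-- Multiplication by `t_ī/t_0` on `F_a`, odd `ī`. -/
def aDivO {m n : ℕ} (i : Fin n) : Module.End ℂ (FaSp m n) :=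
  mkOp fun x => if x.2 i then 0 else
    ((-1 : ℂ) ^ (cntB x.2 i)) • amono (x.1, Function.update x.2 i true)

/-- The operator `t_0∂_0` on `F_a` (the exponent of `t_0` is `a` minus the total degree of the
other variables). -/
def aPar0 {m n : ℕ} (a : ℂ) : Module.End ℂ (FaSp m n) :=
  mkOp fun x => (a - (∑ i, (x.1 i : ℂ)) - (cntA x.2 : ℂ)) • amono x

/-- The operator `t_0∂_i` on `F_a`, even `i`. -/
def aParE {m n : ℕ} (i : Fin m) : Module.End ℂ (FaSp m n) :=
  mkOp fun x => (x.1 i : ℂ) • amono (Function.update x.1 i (x.1 i - 1), x.2)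

/-- The operator `t_0∂_ī` on `F_a`, odd `ī`. -/
def aParO {m n : ℕ} (i : Fin n) : Module.End ℂ (FaSp m n) :=
  mkOp fun x => if x.2 i then
    ((-1 : ℂ) ^ (cntB x.2 i)) • amono (x.1, Function.update x.2 i false) else 0

/-- `t_i/t_0` on `F_a` for `i ∈ I`. -/
def aDiv {m n : ℕ} : Ind m n → Module.End ℂ (FaSp m n) := Sum.elim aDivE aDivO

/-- `t_0∂_i` on `F_a` for `i ∈ Î`. -/
def aParB {m n : ℕ} (a : ℂ) : Ind (m+1) n → Module.End ℂ (FaSp m n) :=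
  Sum.elim (Fin.cases (aPar0 a) aParE) aParO

/-- `t_i/t_0` on `F_a` for `i ∈ Î`. -/
def aDivB {m n : ℕ} : Ind (m+1) n → Module.End ℂ (FaSp m n) :=
  Sum.elim (Fin.cases 1 aDivE) aDivO

/-- The operator `t_i∂_j` on `F_a`, `i, j ∈ Î`. -/
def aTD {m n : ℕ} (a : ℂ) (i j : Ind (m+1) n) : Module.End ℂ (FaSp m n) :=
  aDivB i * aParB a j

/-- The simple highest weight module `L(λ)` over `U(gl(m|n))`: a simple module with a
(nonzero) highest weight vector of weight `λ`. -/
structure SimpleHW (m n : ℕ) (lam : Ind m n → ℂ) where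
  L : Type
  [acg : AddCommGroup L]
  [mod : Module ℂ L]
  ρ : UEA (Ind m n) pI →ₐ[ℂ] Module.End ℂ L
  v : L
  v_ne : v ≠ 0
  hw : ∀ i j : Ind m n, iltI i j → ρ (gen pI i j) v = 0
  hwt : ∀ i : Ind m n, ρ (gen pI i i) v = lam i • v
  simple : ∀ N : Submodule ℂ L, (∀ u x, x ∈ N → ρ u x ∈ N) → N = ⊥ ∨ N = ⊤

attribute [instance] SimpleHW.acg SimpleHW.mod

/-- The Verma module `M(λ)` over `U(gl(m|n))`: a module generated by a highest weight vector
of weight `λ` which is universal among such. -/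
structure VermaM (m n : ℕ) (lam : Ind m n → ℂ) where
  L : Type
  [acg : AddCommGroup L]
  [mod : Module ℂ L]
  ρ : UEA (Ind m n) pI →ₐ[ℂ] Module.End ℂ L
  v : L
  v_ne : v ≠ 0
  hw : ∀ i j : Ind m n, iltI i j → ρ (gen pI i j) v = 0
  hwt : ∀ i : Ind m n, ρ (gen pI i i) v = lam i • v
  gens : ∀ N : Submodule ℂ L, (∀ u x, x ∈ N → ρ u x ∈ N) → v ∈ N → N = ⊤
  univ : ∀ (W : Type) [AddCommGroup W] [Module ℂ W]
      (ρW : UEA (Ind m n) pI →ₐ[ℂ] Module.End ℂ W) (w : W),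
      (∀ i j : Ind m n, iltI i j → ρW (gen pI i j) w = 0) →
      (∀ i : Ind m n, ρW (gen pI i i) w = lam i • w) →
      ∃ g : L →ₗ[ℂ] W, g v = w ∧ ∀ u x, g (ρ u x) = ρW u (g x)

attribute [instance] VermaM.acg VermaM.mod

/-- The predicate expressing that `Θ` is the representation of `U(gl(m+1|n))` on
`F_a ⊗ L` obtained via `φ_R` from a representation `ρ` of `U(gl(m|n))` on `L`, where the
central element `R` acts by the scalar `r`; the formulas for the action of the generators on
pure tensors (with the appropriate Koszul signs) are written out explicitly. -/
def IsTensorRep {m n : ℕ} (a r : ℂ) {L : Type} [AddCommGroup L] [Module ℂ L]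
    (ρ : UEA (Ind m n) pI →ₐ[ℂ] Module.End ℂ L)
    (Θ : UEA (Ind (m+1) n) pI →ₐ[ℂ] Module.End ℂ (FaSp m n ⊗[ℂ] L)) : Prop :=
  (∀ (c d : Ind m n) (x : FaMon m n) (v : L),
    Θ (gen pI (emb c) (emb d)) (amono x ⊗ₜ[ℂ] v) =
      (aTD a (emb c) (emb d)) (amono x) ⊗ₜ[ℂ] v
      + ((-1 : ℂ) ^ ((pI c + pI d) * parM x)) • (amono x ⊗ₜ[ℂ] (ρ (gen pI c d) v))
      + (if c = d then (((-1 : ℂ) ^ (pI c * pI d)) * r) • (amono x ⊗ₜ[ℂ] v) else 0)) ∧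
  (∀ (c : Ind m n) (x : FaMon m n) (v : L),
    Θ (gen pI (emb c) z0) (amono x ⊗ₜ[ℂ] v) =
      (aTD a (emb c) z0) (amono x) ⊗ₜ[ℂ] v
      - ∑ j : Ind m n, (((-1 : ℂ) ^ (pI c * pI j)) * ((-1 : ℂ) ^ ((pI c + pI j) * parM x))) •
          ((aDiv j (amono x)) ⊗ₜ[ℂ] (ρ (gen pI c j) v))) ∧
  (∀ (d : Ind m n) (x : FaMon m n) (v : L),
    Θ (gen pI z0 (emb d)) (amono x ⊗ₜ[ℂ] v) = (aTD a z0 (emb d)) (amono x) ⊗ₜ[ℂ] v) ∧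
  (∀ (x : FaMon m n) (v : L),
    Θ (gen pI z0 z0) (amono x ⊗ₜ[ℂ] v) =
      (aTD a z0 z0) (amono x) ⊗ₜ[ℂ] v + r • (amono x ⊗ₜ[ℂ] v))

/-- The shifted weight `λ̃ = (a+r, λ_1+r, …, λ_m+r, λ_{1̄}−r, …, λ_{n̄}−r)`. -/
def lamTilde {m n : ℕ} (a r : ℂ) (lam : Ind m n → ℂ) : Ind (m+1) n → ℂ :=
  Sum.elim (Fin.cases (a + r) fun k => lam (Sum.inl k) + r) fun k => lam (Sum.inr k) - r

/-- The Weyl vector `ρ_{m|n} = (m, m−1, …, 1, −1, −2, …, −n)`. -/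
def rhoS {m n : ℕ} : Ind m n → ℂ := Sum.elim (fun k => (m : ℂ) - k) fun k => -(k : ℂ) - 1

/-- Antidominance of a weight of `gl(m|n)`:
`⟨λ+ρ, α^∨⟩ ∉ ℤ_{>0}` for all positive even roots `α`. -/
def Antidom {m n : ℕ} (lam : Ind m n → ℂ) : Prop :=
  (∀ i j : Fin m, i < j → ¬∃ N : ℕ,
    (lam (Sum.inl i) + rhoS (m:=m) (n:=n) (Sum.inl i)) - (lam (Sum.inl j) + rhoS (m:=m) (n:=n) (Sum.inl j)) = (N : ℂ) + 1) ∧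
  (∀ i j : Fin n, i < j → ¬∃ N : ℕ,
    (lam (Sum.inr i) + rhoS (m:=m) (n:=n) (Sum.inr i)) - (lam (Sum.inr j) + rhoS (m:=m) (n:=n) (Sum.inr j)) = (N : ℂ) + 1)

/-- Typicality of a weight of `gl(m|n)`:
`(λ+ρ, α) ≠ 0` for all positive odd isotropic roots `α = δ_i − ε_j`. -/
def Typical {m n : ℕ} (lam : Ind m n → ℂ) : Prop :=
  ∀ (i : Fin m) (j : Fin n),
    (lam (Sum.inl i) + rhoS (m:=m) (n:=n) (Sum.inl i)) + (lam (Sum.inr j) + rhoS (m:=m) (n:=n) (Sum.inr j)) ≠ 0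

/-- The submodule `ℂ[E] ⊗ Z(U(gl(m|n)))` of `D'(m|n) ⊗ U(gl(m|n))`. -/
def Zc {m n : ℕ} (ST : SuperTensor m n) : Submodule ℂ ST.T :=
  Submodule.span ℂ {y : ST.T | ∃ (k : ℕ) (z : UEA (Ind m n) pI),
    z ∈ Subalgebra.center ℂ (UEA (Ind m n) pI) ∧ y = ST.inD (En m n ^ k) * ST.inU z}

/-!
Let `ρ` be a representation of `gl(m|n)` on `L`. The algebra `D' ⊗ U(gl(m|n))` acts on `F ⊗ L`,
and `F` is a sum of the fibers of total degree `k ∈ ℤ`, each generated by the vacuum `t₀ ^ k`.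

An element `X` commuting with `t₀ ∂₀`, the `t₀ ∂_b` and the `t_a ∂_b ⊗ 1 ± 1 ⊗ e_ab` preserves the
space of vacuum vectors, and it acts on a fiber as it acts on its vacuum: lowering operators reduce
the total degree of a monomial, and a discrepancy killed by all of them would again be a multiple of
the vacuum, where `t₀ ∂₀` has the wrong eigenvalue. On `t₀ ^ k ⊗ U(gl(m|n))` such an `X` is left
multiplication by a central element depending polynomially on `k`, that is, `X` agrees with an
element of `ℂ[E] ⊗ Z(U(gl(m|n)))`. Since `F ⊗ U(gl(m|n))` is faithful, this applies to `φ_R z` for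
`z` central.

For the formula, let `v` be a highest weight vector of weight `λ`. Then `t₀ ^ k ⊗ v` is a highest
weight vector for `gl(m+1|n)` acting through `φ_R`, so both sides of the identity evaluate to the
scalar by which `z` acts on it. The points `(k, λ + ρ)` are Zariski dense, provided that every
weight `λ` admits a nonzero highest weight vector; this is shown by an explicit oscillator
realization.
-/

namespace UEA

section Generators

variable {ι : Type} {p : ι → ℕ} [DecidableEq ι]
variable {B : Type*} [Ring B] [Algebra ℂ B]

@[elab_as_elim]
theorem induction {motive : UEA ι p → Prop} (algebraMap : ∀ c : ℂ, motive (algebraMap ℂ _ c))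
    (gen : ∀ i j, motive (gen p i j)) (mul : ∀ x y, motive x → motive y → motive (x * y))
    (add : ∀ x y, motive x → motive y → motive (x + y)) (u : UEA ι p) : motive u := by
  obtain ⟨x, rfl⟩ := RingQuot.mkAlgHom_surjective ℂ (glRel ι p) u
  induction x using FreeAlgebra.induction with
  | grade0 c => rw [AlgHom.commutes]; exact algebraMap c
  | grade1 x => exact gen x.1 x.2
  | mul a b ha hb => rw [map_mul]; exact mul _ _ ha hb
  | add a b ha hb => rw [map_add]; exact add _ _ ha hb

/-- A family `A i j` in an algebra satisfying the defining supercommutation relations of the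
generators `e_ij` of `gl`. -/
def IsGlFamily (p : ι → ℕ) (A : ι → ι → B) : Prop :=
  ∀ i j k l,
    A i j * A k l - ((-1 : ℂ) ^ ((p i + p j) * (p k + p l))) • (A k l * A i j) =
      (if j = k then A i l else 0)
        - ((-1 : ℂ) ^ ((p i + p j) * (p k + p l))) • (if l = i then A k j else 0)

theorem IsGlFamily.map {C : Type*} [Ring C] [Algebra ℂ C] {A : ι → ι → B} (hA : IsGlFamily p A)
    (f : B →ₐ[ℂ] C) : IsGlFamily p fun i j => f (A i j) := fun i j k l => by
  simpa only [map_sub, map_mul, map_smul, apply_ite f, map_zero] using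
    congrArg f (hA i j k l)

theorem isGlFamily_gen (p : ι → ℕ) : IsGlFamily p (gen p) := fun i j k l => by
  have h := RingQuot.mkAlgHom_rel ℂ (glRel.basic (p := p) i j k l)
  simp only [map_sub, map_mul, map_smul, apply_ite (RingQuot.mkAlgHom ℂ (glRel ι p)), map_zero] at h
  exact h

/-- The algebra homomorphism out of the enveloping superalgebra determined by the images `A i j`
of the generators. -/
def lift (A : ι → ι → B) (hA : IsGlFamily p A) : UEA ι p →ₐ[ℂ] B :=
  RingQuot.liftAlgHom ℂ ⟨FreeAlgebra.lift ℂ fun x : ι × ι => A x.1 x.2, by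
    rintro _ _ ⟨i, j, k, l⟩
    simpa only [map_sub, map_mul, map_smul, FreeAlgebra.lift_ι_apply,
      apply_ite (FreeAlgebra.lift ℂ fun x : ι × ι => A x.1 x.2), map_zero] using hA i j k l⟩

@[simp]
theorem lift_gen (A : ι → ι → B) (hA : IsGlFamily p A) (i j : ι) :
    lift A hA (gen p i j) = A i j := by
  rw [lift, gen, RingQuot.liftAlgHom_mkAlgHom_apply, FreeAlgebra.lift_ι_apply]

theorem algHom_ext {f g : UEA ι p →ₐ[ℂ] B} (h : ∀ i j, f (gen p i j) = g (gen p i j)) : f = g :=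
  RingQuot.ringQuot_ext' ℂ _ _ <| FreeAlgebra.hom_ext <| funext fun x => h x.1 x.2

theorem mem_center_of_forall_gen {z : UEA ι p} (h : ∀ i j, gen p i j * z = z * gen p i j) :
    z ∈ Subalgebra.center ℂ (UEA ι p) := by
  refine Subalgebra.mem_center_iff.2 fun u => ?_
  induction u using UEA.induction with
  | algebraMap c => exact Algebra.commutes c z
  | gen i j => exact h i j
  | mul x y hx hy => rw [mul_assoc, hy, ← mul_assoc, hx, mul_assoc]
  | add x y hx hy => rw [add_mul, mul_add, hx, hy]

end Generators

section Parity

variable {ι : Type} {p : ι → ℕ} [DecidableEq ι]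
variable {A B : Type*} [Ring A] [Algebra ℂ A] [Ring B] [Algebra ℂ B]

theorem isGlFamily_pow_tmul {P : A} (hP : P * P = 1) {X : ι → ι → B} (hX : IsGlFamily p X) :
    IsGlFamily p fun i j => (P ^ (p i + p j)) ⊗ₜ[ℂ] X i j := fun i j k l => by
  have hPP (a b c : ℕ) : P ^ (a + b) * P ^ (b + c) = P ^ (a + c) := by
    rw [← pow_add, show a + b + (b + c) = a + c + 2 * b by ring, pow_add, pow_mul, sq, hP,
      one_pow, mul_one]
  simp only [Algebra.TensorProduct.tmul_mul_tmul]
  rw [(Commute.refl P).pow_pow (p k + p l) (p i + p j) |>.eq, ← TensorProduct.tmul_smul,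
    ← TensorProduct.tmul_sub, hX, TensorProduct.tmul_sub, TensorProduct.tmul_smul]
  congr 1
  · split_ifs with h
    · rw [h, hPP]
    · rw [TensorProduct.tmul_zero]
  · congr 1
    split_ifs with h
    · rw [h, add_comm (p i) (p j), add_comm (p k) (p i), hPP, add_comm]
    · rw [TensorProduct.tmul_zero]

/-- The Koszul twist `e_ij ↦ P^{|i|+|j|} ⊗ ρ(e_ij)` of a homomorphism `ρ` by an involution `P`:
the second factor of a super tensor product acts in this way, with `P` the parity operator of the
first factor. -/
def parityTwist (P : A) (hP : P * P = 1) (ρ : UEA ι p →ₐ[ℂ] B) : UEA ι p →ₐ[ℂ] A ⊗[ℂ] B :=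
  lift _ (isGlFamily_pow_tmul hP ((isGlFamily_gen p).map ρ))

theorem parityTwist_gen (P : A) (hP : P * P = 1) (ρ : UEA ι p →ₐ[ℂ] B) (i j : ι) :
    parityTwist P hP ρ (gen p i j) = (P ^ (p i + p j)) ⊗ₜ ρ (gen p i j) :=
  lift_gen _ _ i j

/-- The parity homomorphism `u ↦ (-1)^{|u|} u`; it is the Koszul twist by the scalar `-1`. -/
def parityHom (ι : Type) (p : ι → ℕ) [DecidableEq ι] : UEA ι p →ₐ[ℂ] UEA ι p :=
  (Algebra.TensorProduct.lid ℂ _).toAlgHom.comp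
    (parityTwist (-1 : ℂ) (by norm_num) (AlgHom.id ℂ _))

theorem parityHom_gen (i j : ι) :
    parityHom ι p (gen p i j) = (-1 : ℂ) ^ (p i + p j) • gen p i j := by
  rw [parityHom, AlgHom.comp_apply, parityTwist_gen, AlgHom.id_apply]
  exact Algebra.TensorProduct.lid_tmul _ _

theorem parityHom_comp_parityHom : (parityHom ι p).comp (parityHom ι p) = AlgHom.id ℂ _ :=
  algHom_ext fun i j => by
    rw [AlgHom.comp_apply, parityHom_gen, map_smul, parityHom_gen, smul_smul,
      ← mul_pow, neg_one_mul, neg_neg, one_pow, one_smul, AlgHom.id_apply]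

/-- The parity automorphism `u ↦ (-1)^{|u|} u`. -/
def parityAut (ι : Type) (p : ι → ℕ) [DecidableEq ι] : UEA ι p ≃ₐ[ℂ] UEA ι p :=
  AlgEquiv.ofAlgHom (parityHom ι p) (parityHom ι p) parityHom_comp_parityHom
    parityHom_comp_parityHom

theorem parityAut_gen (i j : ι) :
    parityAut ι p (gen p i j) = (-1 : ℂ) ^ (p i + p j) • gen p i j :=
  parityHom_gen i j

theorem parityAut_pow_gen (N : ℕ) (i j : ι) :
    (parityAut ι p ^ N) (gen p i j) = (-1 : ℂ) ^ ((p i + p j) * N) • gen p i j := by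
  induction N with
  | zero => simp
  | succ N ih =>
    rw [pow_succ', AlgEquiv.mul_apply, ih, map_smul, parityAut_gen, smul_smul, ← pow_add,
      mul_add_one]

end Parity

section Center

attribute [local instance] LieRing.ofAssociativeRing

variable (ι : Type) [Fintype ι] [DecidableEq ι] (p : ι → ℕ)

/-- The element `∑ |i| e_ii`; its adjoint action is the integral grading of the enveloping
superalgebra that refines the parity. -/
def gradingElt : UEA ι p := ∑ i, (p i : ℂ) • gen p i i

/-- The elements of degree `c` for the grading by `gradingElt`, of parity `c`. -/
def degreeSpace (c : ℤ) : Submodule ℂ (UEA ι p) :=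
  Module.End.eigenspace (LieAlgebra.ad ℂ (UEA ι p) (gradingElt ι p)) (c : ℂ) ⊓
    Module.End.eigenspace (parityAut ι p).toLinearMap ((-1 : ℂ) ^ c)

variable {ι p}

theorem lie_gradingElt_gen (i j : ι) :
    ⁅gradingElt ι p, gen p i j⁆ = ((p i : ℂ) - p j) • gen p i j := by
  have h (k : ι) : ⁅(p k : ℂ) • gen p k k, gen p i j⁆ =
      (if k = i then (p k : ℂ) • gen p k j else 0) -
        (if j = k then (p k : ℂ) • gen p i k else 0) := by
    have hk := isGlFamily_gen p k k i j
    rw [(Even.add_self (p k)).mul_right (p i + p j) |>.neg_one_pow, one_smul, one_smul] at hk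
    have hsmul := (smul_lie (p k : ℂ) (gen p k k) (gen p i j)).trans <|
      (congrArg ((p k : ℂ) • ·) hk).trans (smul_sub _ _ _)
    rwa [smul_ite, smul_ite, smul_zero] at hsmul
  simp only [gradingElt, sum_lie, h, Finset.sum_sub_distrib, Finset.sum_ite_eq',
    Finset.sum_ite_eq, Finset.mem_univ, if_true]
  exact (sub_smul (p i : ℂ) (p j) (gen p i j)).symm

theorem mem_degreeSpace {c : ℤ} {u : UEA ι p} :
    u ∈ degreeSpace ι p c ↔
      ⁅gradingElt ι p, u⁆ = (c : ℂ) • u ∧ parityAut ι p u = ((-1 : ℂ) ^ c) • u := by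
  simp [degreeSpace]

theorem mul_mem_degreeSpace {c d : ℤ} {u v : UEA ι p} (hu : u ∈ degreeSpace ι p c)
    (hv : v ∈ degreeSpace ι p d) : u * v ∈ degreeSpace ι p (c + d) := by
  rw [mem_degreeSpace] at *
  constructor
  · rw [Ring.lie_def, show gradingElt ι p * (u * v) - u * v * gradingElt ι p =
        ⁅gradingElt ι p, u⁆ * v + u * ⁅gradingElt ι p, v⁆ by
      rw [Ring.lie_def, Ring.lie_def, mul_sub, sub_mul]; simp only [mul_assoc]; abel,
      hu.1, hv.1, smul_mul_assoc, mul_smul_comm,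
      ← add_smul, Int.cast_add]
  · rw [map_mul, hu.2, hv.2, smul_mul_smul_comm, zpow_add₀ (by norm_num)]

theorem iSup_degreeSpace : ⨆ c, degreeSpace ι p c = ⊤ := by
  refine eq_top_iff.2 fun u _ => ?_
  induction u using UEA.induction with
  | algebraMap a =>
    refine Submodule.mem_iSup_of_mem 0 (mem_degreeSpace.2 ⟨?_, ?_⟩)
    · rw [Ring.lie_def, Algebra.commutes, sub_self, Int.cast_zero, zero_smul]
    · rw [AlgEquiv.commutes, zpow_zero, one_smul]
  | gen i j =>
    refine Submodule.mem_iSup_of_mem ((p i : ℤ) - p j) (mem_degreeSpace.2 ⟨?_, ?_⟩)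
    · rw [lie_gradingElt_gen]; push_cast; rfl
    · rw [parityAut_gen, zpow_sub₀ (by norm_num), zpow_natCast, zpow_natCast, pow_add,
        div_eq_mul_inv, ← inv_pow, inv_neg_one]
  | add x y hx hy => exact add_mem (hx trivial) (hy trivial)
  | mul x y hx hy =>
    have hle : (⨆ c, degreeSpace ι p c) * (⨆ d, degreeSpace ι p d) ≤ ⨆ c, degreeSpace ι p c := by
      simp only [Submodule.iSup_mul, Submodule.mul_iSup]
      exact iSup₂_le fun c d => Submodule.mul_le.2 fun u hu v hv =>
        Submodule.mem_iSup_of_mem _ (mul_mem_degreeSpace hu hv)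
    exact hle (Submodule.mul_mem_mul (hx trivial) (hy trivial))

/-- Splitting off the degree zero part, the remainder lies both in the zero eigenspace and in the
sum of the other eigenspaces of the adjoint action of `gradingElt`. -/
theorem parityAut_eq_self_of_lie_eq_zero {u : UEA ι p} (hu : ⁅gradingElt ι p, u⁆ = 0) :
    parityAut ι p u = u := by
  obtain ⟨v, hv, w, hw, rfl⟩ : ∃ v ∈ degreeSpace ι p 0, ∃ w ∈ ⨆ (c) (_ : c ≠ (0 : ℤ)),
      degreeSpace ι p c, v + w = u := by
    rw [← Submodule.mem_sup, ← iSup_split_single, iSup_degreeSpace]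
    trivial
  have hw_lie : ⁅gradingElt ι p, w⁆ = 0 := by
    rwa [lie_add, (mem_degreeSpace.1 hv).1, Int.cast_zero, zero_smul, zero_add] at hu
  let E (a : ℂ) := Module.End.eigenspace (LieAlgebra.ad ℂ (UEA ι p) (gradingElt ι p)) a
  have hw' : w ∈ ⨆ (a) (_ : a ≠ (0 : ℂ)), E a :=
    iSup₂_le (fun c hc => (inf_le_left : degreeSpace ι p c ≤ E c).trans
      (le_iSup₂_of_le (c : ℂ) (Int.cast_ne_zero.2 hc) le_rfl)) hw
  have hw0 : w = 0 := (Submodule.disjoint_def.1 (Module.End.eigenspaces_iSupIndep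
      (LieAlgebra.ad ℂ (UEA ι p) (gradingElt ι p)) 0)) w
    (by simpa [Module.End.mem_eigenspace_iff] using hw_lie) hw'
  rw [hw0, add_zero, (mem_degreeSpace.1 hv).2, zpow_zero, one_smul]

omit [Fintype ι] in
theorem parityAut_pow_of_mem_center [Finite ι] {z : UEA ι p}
    (hz : z ∈ Subalgebra.center ℂ (UEA ι p)) (N : ℕ) : (parityAut ι p ^ N) z = z := by
  cases nonempty_fintype ι
  have h : parityAut ι p z = z := parityAut_eq_self_of_lie_eq_zero <| by
    rw [Ring.lie_def, Subalgebra.mem_center_iff.1 hz, sub_self]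
  induction N with
  | zero => rfl
  | succ N ih => rw [pow_succ, AlgEquiv.mul_apply, h, ih]

end Center

end UEA

section Oscillators

variable {K M W : Type*} [Field K] [Ring W] [Algebra K W]

/-- Creation operators `A` and annihilation operators `B` on a set of sites satisfying the
canonical commutation relations twisted by the signs `κ`. -/
structure IsCCR [DecidableEq M] (κ : M → M → K) (A B : M → W) : Prop where
  create_mul_create : ∀ j k, A j * A k = κ j k • (A k * A j)
  ann_mul_ann : ∀ j k, B j * B k = κ j k • (B k * B j)
  ann_mul_create : ∀ j k, B j * A k = κ j k • (A k * B j) + if j = k then 1 else 0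

/-- The relations for the coefficients of a creation operator `|k⟩ ↦ α k |k + 1⟩` and an
annihilation operator `|k⟩ ↦ β k |k - 1⟩` at a single site (a boson if `ε = 1`, a fermion if
`ε = -1`). -/
structure IsLocalCCR (ε : K) (α β : ℤ → K) : Prop where
  create : ∀ k, α (k + 1) * α k = ε * (α (k + 1) * α k)
  ann : ∀ k, β (k - 1) * β k = ε * (β (k - 1) * β k)
  ann_create : ∀ k, β (k + 1) * α k - ε * (α (k - 1) * β k) = 1

theorem isLocalCCR_boson (c : K) : IsLocalCCR 1 (fun _ => 1) fun k => c + k where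
  create _ := (one_mul _).symm
  ann _ := (one_mul _).symm
  ann_create k := by push_cast; ring

theorem IsLocalCCR.swap {ε : K} (hε : ε * ε = 1) {α β : ℤ → K} (h : IsLocalCCR ε α β) :
    IsLocalCCR ε (fun k => -ε * β (-k)) fun k => α (-k) where
  create k := by
    have h1 := h.ann (-k)
    rw [show -(k + 1) = -k - 1 by ring]
    linear_combination (ε * ε) * h1
  ann k := by
    have h1 := h.create (-k)
    rw [show -(k - 1) = -k + 1 by ring]
    linear_combination h1
  ann_create k := by
    have h1 := h.ann_create (-k)
    rw [show -(k + 1) = -k - 1 by ring, show -(k - 1) = -k + 1 by ring]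
    linear_combination h1 + (β (-k + 1) * α (-k)) * hε

theorem isLocalCCR_fermion :
    IsLocalCCR (-1 : K) (fun k => if Even k then 1 else 0) fun k => if Even k then 0 else 1 where
  create k := by by_cases h : Even k <;> simp only [Int.even_add_one, h] <;> simp
  ann k := by by_cases h : Even k <;> simp only [Int.even_sub_one, h] <;> simp
  ann_create k := by
    by_cases h : Even k <;> simp only [Int.even_add_one, Int.even_sub_one, h] <;> simp

section FockSpace

variable [Fintype M] (Q : M → M → K)

/-- The sign acquired when an operator at the site `j` passes the excitations of the state `x`. -/
def jordanWigner (j : M) (x : M → ℤ) : K := ∏ l, Q l j ^ x l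

theorem jordanWigner_mul_self {Q : M → M → K} (hQ : ∀ i j, Q i j * Q i j = 1) (j : M)
    (x : M → ℤ) : jordanWigner Q j x * jordanWigner Q j x = 1 := by
  simp only [jordanWigner, ← Finset.prod_mul_distrib, ← mul_zpow, hQ, one_zpow,
    Finset.prod_const_one]

variable [DecidableEq M]

/-- The operator on the Fock space shifting the occupation number of the site `j` by `e`, with
coefficient `c` and its Jordan–Wigner sign. -/
def siteShift (j : M) (e : ℤ) (c : ℤ → K) : Module.End K ((M → ℤ) →₀ K) :=
  Finsupp.linearCombination K fun x =>
    Finsupp.single (x + Pi.single j e) (jordanWigner Q j x * c (x j))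

theorem siteShift_single (j : M) (e : ℤ) (c : ℤ → K) (x : M → ℤ) (b : K) :
    siteShift Q j e c (Finsupp.single x b) =
      Finsupp.single (x + Pi.single j e) (b * (jordanWigner Q j x * c (x j))) := by
  rw [siteShift, Finsupp.linearCombination_single, Finsupp.smul_single, smul_eq_mul]

variable {Q}

theorem jordanWigner_add_single (hQ : ∀ i j, Q i j * Q i j = 1) (j k : M) (x : M → ℤ) (e : ℤ) :
    jordanWigner Q j (x + Pi.single k e) = jordanWigner Q j x * Q k j ^ e := by
  have hQ₀ (l : M) : Q l j ≠ 0 := left_ne_zero_of_mul_eq_one (hQ l j)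
  simp only [jordanWigner, Pi.add_apply, zpow_add₀ (hQ₀ _), Finset.prod_mul_distrib]
  congr 1
  rw [Finset.prod_eq_single k (fun l _ hl => by rw [Pi.single_eq_of_ne hl, zpow_zero])
    (fun h => absurd (Finset.mem_univ k) h), Pi.single_eq_same]

theorem siteShift_siteShift_single (hQ : ∀ i j, Q i j * Q i j = 1) {j : M} (hj : Q j j = 1)
    (e f : ℤ) (c d : ℤ → K) (x : M → ℤ) (b : K) :
    siteShift Q j e c (siteShift Q j f d (Finsupp.single x b)) =
      Finsupp.single (x + Pi.single j (f + e)) (b * (d (x j) * c (x j + f))) := by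
  rw [siteShift_single, siteShift_single, jordanWigner_add_single hQ, hj, one_zpow, mul_one,
    add_assoc, ← Pi.single_add, Pi.add_apply, Pi.single_eq_same]
  congr 1
  linear_combination (b * d (x j) * c (x j + f)) * jordanWigner_mul_self hQ j x

theorem siteShift_mul_siteShift_of_ne (hQ : ∀ i j, Q i j * Q i j = 1) {j k : M} (hjk : j ≠ k)
    {e f : ℤ} (he : Odd e) (hf : Odd f) (c d : ℤ → K) :
    siteShift Q j e c * siteShift Q k f d =
      (Q j k * Q k j) • (siteShift Q k f d * siteShift Q j e c) := by
  have hodd (i j : M) {e : ℤ} (he : Odd e) : Q i j ^ e = Q i j := by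
    obtain ⟨r, rfl⟩ := he
    rw [zpow_add₀ (left_ne_zero_of_mul_eq_one (hQ i j)), zpow_mul, zpow_ofNat, sq, hQ, one_zpow,
      one_mul, zpow_one]
  refine Finsupp.lhom_ext fun x b => ?_
  simp only [Module.End.mul_apply, LinearMap.smul_apply, siteShift_single,
    jordanWigner_add_single hQ, Finsupp.smul_single, Pi.add_apply, Pi.single_eq_of_ne hjk,
    Pi.single_eq_of_ne hjk.symm, add_zero, hodd _ _ he, hodd _ _ hf, smul_eq_mul]
  rw [add_right_comm]
  congr 1
  linear_combination (-b * jordanWigner Q j x * jordanWigner Q k x * c (x j) * d (x k) * Q k j) *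
    hQ j k

theorem isCCR_siteShift (hQ : ∀ i j, Q i j * Q i j = 1) (hQ_self : ∀ i, Q i i = 1)
    {κ : M → M → K} (hκ : ∀ i j, i ≠ j → κ i j = Q i j * Q j i) {α β : M → ℤ → K}
    (h : ∀ j, IsLocalCCR (κ j j) (α j) (β j)) :
    IsCCR κ (fun j => siteShift Q j 1 (α j)) fun j => siteShift Q j (-1) (β j) where
  create_mul_create j k := by
    obtain rfl | hjk := eq_or_ne j k
    · refine Finsupp.lhom_ext fun x b => ?_
      simp only [Module.End.mul_apply, LinearMap.smul_apply, Finsupp.smul_single, smul_eq_mul,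
        siteShift_siteShift_single hQ (hQ_self j)]
      congr 1
      linear_combination b * (h j).create (x j)
    · rw [hκ j k hjk, siteShift_mul_siteShift_of_ne hQ hjk (by decide) (by decide)]
  ann_mul_ann j k := by
    obtain rfl | hjk := eq_or_ne j k
    · refine Finsupp.lhom_ext fun x b => ?_
      simp only [Module.End.mul_apply, LinearMap.smul_apply, Finsupp.smul_single, smul_eq_mul,
        siteShift_siteShift_single hQ (hQ_self j)]
      congr 1
      linear_combination (norm := ring_nf) b * (h j).ann (x j)
    · rw [hκ j k hjk, siteShift_mul_siteShift_of_ne hQ hjk (by decide) (by decide)]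
  ann_mul_create j k := by
    obtain rfl | hjk := eq_or_ne j k
    · refine Finsupp.lhom_ext fun x b => ?_
      simp only [Module.End.mul_apply, LinearMap.add_apply, LinearMap.smul_apply,
        Finsupp.smul_single, smul_eq_mul, siteShift_siteShift_single hQ (hQ_self j), if_true,
        Module.End.one_apply, add_neg_cancel, neg_add_cancel, Pi.single_zero, add_zero]
      rw [← Finsupp.single_add]
      congr 1
      linear_combination (norm := ring_nf) b * (h j).ann_create (x j)
    · rw [hκ j k hjk, siteShift_mul_siteShift_of_ne hQ hjk (by decide) (by decide), if_neg hjk,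
        add_zero]

end FockSpace

/-- Normal ordering: both products equal the normally ordered `A a * A c * (B b * B d)` up to sign
and contraction terms. -/
theorem IsCCR.quadratic_supercommutator [DecidableEq M] {κ : M → M → K} {A B : M → W}
    (h : IsCCR κ A B) (a b c d : M) {ε : K} (hε : ε * (κ d a * κ c a * κ d b) = κ b c) :
    (A a * B b) * (A c * B d) - ε • ((A c * B d) * (A a * B b)) =
      (if b = c then A a * B d else 0) - ε • (if d = a then A c * B b else 0) := by
  have contract (a b c d : M) : (A a * B b) * (A c * B d) =
      κ b c • (A a * A c * (B b * B d)) + if b = c then A a * B d else 0 := by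
    rw [mul_assoc, ← mul_assoc (B b), h.ann_mul_create]
    split_ifs <;> simp only [mul_add, add_mul, mul_assoc, mul_smul_comm, smul_mul_assoc, one_mul,
      add_zero]
  have reorder : A c * A a * (B d * B b) = (κ c a * κ d b) • (A a * A c * (B b * B d)) := by
    rw [h.create_mul_create c a, h.ann_mul_ann d b, smul_mul_smul_comm]
  rw [contract a b c d, contract c d a b, reorder, smul_add, smul_smul, smul_smul, mul_assoc ε,
    ← mul_assoc (κ d a), hε]
  abel

end Oscillators

section GlOscillators

variable {ι : Type} (p : ι → ℕ)

/-- The parity of the oscillator at the site `(s, i)`. -/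
def sitePar (x : ι × ι) : ℕ := p x.1 + p x.2

/-- The commutation sign of the oscillators at two sites. -/
def siteSign (x y : ι × ι) : ℂ := (-1) ^ (sitePar p x * sitePar p y)

variable {p} in
theorem siteSign_mul_self (x y : ι × ι) : siteSign p x y * siteSign p x y = 1 := by
  rw [siteSign, ← mul_pow, neg_one_mul, neg_neg, one_pow]

variable {p} in
theorem siteSign_comm (x y : ι × ι) : siteSign p x y = siteSign p y x := by
  rw [siteSign, siteSign, mul_comm]

variable (pos : ι → ℕ) (a : ι → ℂ)

/-- The annihilation coefficients of a standard oscillator of parity `q`; they vanish on the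
vacuum. -/
def stdAnn (q : ℕ) (k : ℤ) : ℂ := if Even q then k else if Even k then 0 else 1

/-- The creation coefficients of a standard oscillator of parity `q`. -/
def stdCreate (q : ℕ) (k : ℤ) : ℂ := if Even q then 1 else if Even k then 1 else 0

/-- The creation and annihilation coefficients at the site `(s, i)`. Sites with `s` before `i` are
standard, those with `s` after `i` have creation and annihilation interchanged, and the sites
`(i, i)`, which have no vacuum, carry the free parameters `a i` of the weight. -/
def siteCoeffs [DecidableEq ι] (x : ι × ι) : (ℤ → ℂ) × (ℤ → ℂ) :=
  if x.1 = x.2 then (fun _ => 1, fun k => a x.1 + k)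
  else if pos x.1 < pos x.2 then (stdCreate (sitePar p x), stdAnn (sitePar p x))
  else (fun k => -(-1) ^ sitePar p x * stdAnn (sitePar p x) (-k),
    fun k => stdCreate (sitePar p x) (-k))

theorem isLocalCCR_std (q : ℕ) : IsLocalCCR ((-1 : ℂ) ^ q) (stdCreate q) (stdAnn q) := by
  by_cases hq : Even q
  · have hcreate : stdCreate q = fun _ => 1 := funext fun _ => if_pos hq
    have hann : stdAnn q = fun k : ℤ => 0 + (k : ℂ) :=
      funext fun k => by rw [stdAnn, if_pos hq, zero_add]
    rw [hq.neg_one_pow, hcreate, hann]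
    exact isLocalCCR_boson 0
  · have hcreate : stdCreate q = fun k => if Even k then 1 else 0 := funext fun _ => if_neg hq
    have hann : stdAnn q = fun k => if Even k then 0 else 1 := funext fun _ => if_neg hq
    rw [(Nat.not_even_iff_odd.1 hq).neg_one_pow, hcreate, hann]
    exact isLocalCCR_fermion

theorem isLocalCCR_siteCoeffs [DecidableEq ι] (x : ι × ι) :
    IsLocalCCR (siteSign p x x) (siteCoeffs p pos a x).1 (siteCoeffs p pos a x).2 := by
  have hsign : siteSign p x x = (-1) ^ sitePar p x :=
    neg_one_pow_congr (by rw [Nat.even_mul, or_self])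
  rw [hsign, siteCoeffs]
  split_ifs with heq
  · rw [sitePar, heq, (Even.add_self _).neg_one_pow]
    exact isLocalCCR_boson _
  · exact isLocalCCR_std _
  · exact (isLocalCCR_std _).swap (by rw [← hsign]; exact siteSign_mul_self x x)

variable [Fintype ι]

/-- One half of `siteSign`: an order of the sites is chosen, and only larger sites see the
excitations of smaller ones. -/
def orderedSign (x y : ι × ι) : ℂ :=
  if Fintype.equivFin _ x < Fintype.equivFin _ y then siteSign p x y else 1

theorem orderedSign_mul_self (x y : ι × ι) : orderedSign p x y * orderedSign p x y = 1 := by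
  rw [orderedSign]
  split_ifs
  · exact siteSign_mul_self x y
  · exact one_mul 1

theorem orderedSign_self (x : ι × ι) : orderedSign p x x = 1 := if_neg (lt_irrefl _)

theorem siteSign_eq_orderedSign_mul {x y : ι × ι} (h : x ≠ y) :
    siteSign p x y = orderedSign p x y * orderedSign p y x := by
  rw [orderedSign, orderedSign]
  rcases lt_or_gt_of_ne ((Fintype.equivFin (ι × ι)).injective.ne h) with hlt | hlt
  · rw [if_pos hlt, if_neg hlt.not_gt, mul_one]
  · rw [if_neg hlt.not_gt, if_pos hlt, one_mul, siteSign_comm]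

variable [DecidableEq ι]

theorem IsCCR.isGlFamily {W : Type*} [Ring W] [Algebra ℂ W] {A B : ι × ι → W}
    (h : IsCCR (siteSign p) A B) :
    UEA.IsGlFamily p fun i j => ∑ s, A (s, i) * B (s, j) := fun i j k l => by
  have hsign (s t : ι) : (-1 : ℂ) ^ ((p i + p j) * (p k + p l)) *
      (siteSign p (t, l) (s, i) * siteSign p (t, k) (s, i) * siteSign p (t, l) (s, j)) =
        siteSign p (s, j) (t, k) := by
    simp only [siteSign, sitePar, ← pow_add]
    refine neg_one_pow_congr ?_
    simp only [Nat.even_add, Nat.even_mul]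
    tauto
  have hst (s t : ι) := h.quadratic_supercommutator (s, i) (s, j) (t, k) (t, l) (hsign s t)
  simp only [Finset.sum_mul_sum]
  rw [Finset.sum_comm (f := fun t s => A (t, k) * B (t, l) * (A (s, i) * B (s, j)))]
  simp only [Finset.smul_sum, ← Finset.sum_sub_distrib, hst]
  simp only [Finset.sum_sub_distrib, Prod.mk.injEq, ite_and, ← Finset.smul_sum]
  congr 1
  · simp only [Finset.sum_ite_eq, Finset.mem_univ, if_true]
    split_ifs <;> simp
  · simp only [Finset.sum_ite_eq', Finset.mem_univ, if_true]
    split_ifs <;> simp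

/-- The creation operators of the oscillator representation of `gl`. -/
def create (x : ι × ι) : Module.End ℂ ((ι × ι → ℤ) →₀ ℂ) :=
  siteShift (orderedSign p) x 1 (siteCoeffs p pos a x).1

/-- The annihilation operators of the oscillator representation of `gl`. -/
def annihilate (x : ι × ι) : Module.End ℂ ((ι × ι → ℤ) →₀ ℂ) :=
  siteShift (orderedSign p) x (-1) (siteCoeffs p pos a x).2

theorem isCCR_create_annihilate :
    IsCCR (siteSign p) (create p pos a) (annihilate p pos a) :=
  isCCR_siteShift (orderedSign_mul_self p) (orderedSign_self p)
    (fun _ _ => siteSign_eq_orderedSign_mul p) (isLocalCCR_siteCoeffs p pos a)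

/-- The oscillator representation `e_ij ↦ ∑ₛ A (s, i) B (s, j)` of the general linear Lie
superalgebra. -/
def fockRep : UEA ι p →ₐ[ℂ] Module.End ℂ ((ι × ι → ℤ) →₀ ℂ) :=
  UEA.lift _ (isCCR_create_annihilate p pos a).isGlFamily

theorem fockRep_gen_apply (i j : ι) (x : (ι × ι → ℤ) →₀ ℂ) :
    fockRep p pos a (gen p i j) x =
      ∑ s, create p pos a (s, i) (annihilate p pos a (s, j) x) := by
  rw [fockRep, UEA.lift_gen, LinearMap.sum_apply]
  rfl

variable {p pos}

theorem fockRep_raising_vacuum {i j : ι} (hij : pos i < pos j) :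
    fockRep p pos a (gen p i j) (Finsupp.single 0 1) = 0 := by
  rw [fockRep_gen_apply]
  refine Finset.sum_eq_zero fun s _ => ?_
  have hsite : ((0 : ι × ι → ℤ) + Pi.single (s, j) (-1) : ι × ι → ℤ) (s, i) = 0 := by
    have : (s, i) ≠ (s, j) := fun h => hij.ne (congrArg (pos ∘ Prod.snd) h)
    rw [zero_add, Pi.single_eq_of_ne this]
  rw [annihilate, create, siteShift_single, siteShift_single, hsite, Finsupp.single_eq_zero]
  by_cases hs : pos s < pos j
  · have : (siteCoeffs p pos a (s, j)).2 0 = 0 := by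
      rw [siteCoeffs, if_neg (fun h => hs.ne (congrArg pos h)), if_pos hs]
      simp [stdAnn]
    rw [Pi.zero_apply, this, mul_zero, mul_zero, zero_mul]
  · have his : pos i < pos s := hij.trans_le (not_lt.1 hs)
    have : (siteCoeffs p pos a (s, i)).1 0 = 0 := by
      rw [siteCoeffs, if_neg (fun h => his.ne' (congrArg pos h)), if_neg his.not_gt]
      simp [stdAnn]
    rw [this, mul_zero, mul_zero]

theorem fockRep_diag_vacuum (i : ι) :
    fockRep p pos a (gen p i i) (Finsupp.single 0 1) =
      (a i + ∑ s ∈ Finset.univ.erase i,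
        (siteCoeffs p pos 0 (s, i)).2 0 * (siteCoeffs p pos 0 (s, i)).1 (-1)) •
        Finsupp.single 0 1 := by
  have hterm (s : ι) : create p pos a (s, i) (annihilate p pos a (s, i) (Finsupp.single 0 1)) =
      ((siteCoeffs p pos a (s, i)).2 0 * (siteCoeffs p pos a (s, i)).1 (-1)) •
        Finsupp.single 0 1 := by
    rw [annihilate, create,
      siteShift_siteShift_single (orderedSign_mul_self p) (orderedSign_self p _)]
    simp
  simp only [fockRep_gen_apply, hterm]
  rw [← Finset.sum_smul, ← Finset.add_sum_erase _ _ (Finset.mem_univ i)]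
  congr 2
  · simp [siteCoeffs]
  · refine Finset.sum_congr rfl fun s hs => ?_
    have hsi : s ≠ i := Finset.ne_of_mem_erase hs
    simp only [siteCoeffs, if_neg hsi]

end GlOscillators

section HighestWeight

variable {m n : ℕ}

/-- The position of an index in the order `1 < ⋯ < m < 1̄ < ⋯ < n̄`. -/
def indexPos (i : Ind m n) : ℕ := finSumFinEquiv i

theorem iltI_iff_indexPos_lt {i j : Ind m n} : iltI i j ↔ indexPos i < indexPos j := by
  rcases i with i | i <;> rcases j with j | j <;> simp [iltI, indexPos] <;> omega

/-- `v` satisfies the equations of a highest weight vector of weight `lam` in the representation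
`ρ`; the vector `v = 0` is allowed. -/
structure IsHighestWeight {L : Type*} [AddCommGroup L] [Module ℂ L]
    (ρ : UEA (Ind m n) pI →ₐ[ℂ] Module.End ℂ L) (lam : Ind m n → ℂ) (v : L) : Prop where
  raising : ∀ i j : Ind m n, iltI i j → ρ (gen pI i j) v = 0
  weight : ∀ i : Ind m n, ρ (gen pI i i) v = lam i • v

theorem exists_ne_zero_isHighestWeight (lam : Ind m n → ℂ) :
    ∃ (L : Type) (_ : AddCommGroup L) (_ : Module ℂ L)
      (ρ : UEA (Ind m n) pI →ₐ[ℂ] Module.End ℂ L) (v : L), v ≠ 0 ∧ IsHighestWeight ρ lam v := by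
  let shift (i : Ind m n) : ℂ := ∑ s ∈ Finset.univ.erase i,
    (siteCoeffs pI indexPos 0 (s, i)).2 0 * (siteCoeffs pI indexPos 0 (s, i)).1 (-1)
  refine ⟨_, _, _, fockRep pI indexPos (lam - shift), Finsupp.single 0 1,
    Finsupp.single_ne_zero.2 one_ne_zero, fun i j hij => ?_, fun i => ?_⟩
  · exact fockRep_raising_vacuum _ (iltI_iff_indexPos_lt.1 hij)
  · rw [fockRep_diag_vacuum, Pi.sub_apply, sub_add_cancel]

end HighestWeight

section Verma

variable {m n : ℕ}

/-- The left ideal annihilating the highest weight vector of the Verma module of weight `lam`. -/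
def vermaIdeal (lam : Ind m n → ℂ) : Submodule (UEA (Ind m n) pI) (UEA (Ind m n) pI) :=
  Submodule.span _ ({x | ∃ i j : Ind m n, iltI i j ∧ x = gen pI i j} ∪
    {x | ∃ i : Ind m n, x = gen pI i i - algebraMap ℂ _ (lam i)})

variable {lam : Ind m n → ℂ} {W : Type} [AddCommGroup W] [Module ℂ W]
  {ρ : UEA (Ind m n) pI →ₐ[ℂ] Module.End ℂ W} {w : W}

theorem IsHighestWeight.apply_eq_zero (h : IsHighestWeight ρ lam w) {u : UEA (Ind m n) pI}
    (hu : u ∈ vermaIdeal lam) : ρ u w = 0 := by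
  induction hu using Submodule.span_induction with
  | mem x hx =>
    obtain ⟨i, j, hij, rfl⟩ | ⟨i, rfl⟩ := hx
    · exact h.raising i j hij
    · rw [map_sub, LinearMap.sub_apply, h.weight, AlgHom.commutes, Module.algebraMap_end_apply,
        sub_self]
  | zero => rw [map_zero, LinearMap.zero_apply]
  | add x y _ _ hx hy => rw [map_add, LinearMap.add_apply, hx, hy, add_zero]
  | smul a x _ hx => rw [smul_eq_mul, map_mul, Module.End.mul_apply, hx, map_zero]

/-- The linear map `u ↦ ρ u w` out of the Verma module. -/
def IsHighestWeight.desc (h : IsHighestWeight ρ lam w) :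
    (UEA (Ind m n) pI ⧸ vermaIdeal lam) →ₗ[ℂ] W :=
  ((vermaIdeal lam).restrictScalars ℂ).liftQ ((LinearMap.applyₗ w).comp ρ.toLinearMap)
    fun _ hu => h.apply_eq_zero hu

theorem IsHighestWeight.desc_mk (h : IsHighestWeight ρ lam w) (u : UEA (Ind m n) pI) :
    h.desc (Submodule.Quotient.mk u) = ρ u w := rfl

theorem IsHighestWeight.nonempty_vermaM (h : IsHighestWeight ρ lam w) (hw : w ≠ 0) :
    Nonempty (VermaM m n lam) := by
  have act (u x : UEA (Ind m n) pI) :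
      Algebra.lsmul ℂ ℂ (UEA (Ind m n) pI ⧸ vermaIdeal lam) u (Submodule.Quotient.mk x) =
        Submodule.Quotient.mk (u * x) := rfl
  refine ⟨{
    L := UEA (Ind m n) pI ⧸ vermaIdeal lam
    ρ := Algebra.lsmul ℂ ℂ _
    v := Submodule.Quotient.mk 1
    v_ne := fun h1 => hw ?_
    hw := fun i j hij => ?_
    hwt := fun i => ?_
    gens := fun N hN hv => eq_top_iff.2 fun x _ => ?_
    univ := fun W' _ _ ρ' w' raising weight => ?_ }⟩
  · rw [← Module.End.one_apply w (R := ℂ), ← map_one ρ]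
    exact h.apply_eq_zero ((Submodule.Quotient.mk_eq_zero _).1 h1)
  · rw [act, mul_one, Submodule.Quotient.mk_eq_zero]
    exact Submodule.subset_span (Or.inl ⟨i, j, hij, rfl⟩)
  · rw [act, mul_one, ← Submodule.Quotient.mk_smul, Submodule.Quotient.eq,
      ← Algebra.algebraMap_eq_smul_one]
    exact Submodule.subset_span (Or.inr ⟨i, rfl⟩)
  · obtain ⟨u, rfl⟩ := Submodule.Quotient.mk_surjective _ x
    rw [← mul_one u, ← act]
    exact hN u _ hv
  · have h' : IsHighestWeight ρ' lam w' := ⟨raising, weight⟩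
    refine ⟨h'.desc, ?_, fun u x => ?_⟩
    · rw [h'.desc_mk, map_one, Module.End.one_apply]
    · obtain ⟨y, rfl⟩ := Submodule.Quotient.mk_surjective _ x
      rw [act, h'.desc_mk, h'.desc_mk, map_mul, Module.End.mul_apply]

/-- `χ` is the Harish-Chandra map: `z` acts on the Verma module of weight `lam` by the value of
`χ z` at `lam + ρ`. -/
def IsHarishChandra
    (χ : Subalgebra.center ℂ (UEA (Ind m n) pI) → MvPolynomial (Ind m n) ℂ) : Prop :=
  ∀ (z : Subalgebra.center ℂ (UEA (Ind m n) pI)) (lam : Ind m n → ℂ) (V : VermaM m n lam)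
    (x : V.L), V.ρ z x = MvPolynomial.eval (fun i => lam i + rhoS i) (χ z) • x

theorem IsHighestWeight.center_apply (h : IsHighestWeight ρ lam w)
    {χ : Subalgebra.center ℂ (UEA (Ind m n) pI) → MvPolynomial (Ind m n) ℂ}
    (hχ : IsHarishChandra χ) (z : Subalgebra.center ℂ (UEA (Ind m n) pI)) :
    ρ z w = MvPolynomial.eval (fun i => lam i + rhoS i) (χ z) • w := by
  obtain rfl | hw := eq_or_ne w 0
  · rw [map_zero, smul_zero]
  · obtain ⟨V⟩ := h.nonempty_vermaM hw
    obtain ⟨g, rfl, hg⟩ := V.univ W ρ w h.raising h.weight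
    rw [← hg, hχ, map_smul]

end Verma

section Monomials

variable {m n : ℕ}

/-- The exponents of a monomial in the variables `t_b`, `b ∈ I`. -/
def exponent (y : FaMon m n) : Ind m n → ℕ := Sum.elim y.1 fun i => (y.2 i).toNat

/-- The degree of a monomial in the variables `t_b`, `b ∈ I`. -/
def degM (y : FaMon m n) : ℕ := ∑ b, exponent y b

/-- The monomial obtained by multiplication by `t_b`; it is only meaningful if
`divCoeff b y ≠ 0`. -/
def raiseMon : Ind m n → FaMon m n → FaMon m n
  | Sum.inl i, y => (Function.update y.1 i (y.1 i + 1), y.2)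
  | Sum.inr i, y => (y.1, Function.update y.2 i true)

/-- The monomial obtained by differentiation with respect to `t_b`; it is only meaningful if
`parCoeff b y ≠ 0`. -/
def lowerMon : Ind m n → FaMon m n → FaMon m n
  | Sum.inl i, y => (Function.update y.1 i (y.1 i - 1), y.2)
  | Sum.inr i, y => (y.1, Function.update y.2 i false)

/-- The coefficient of `raiseMon b y` in the product of `t_b` and the monomial `y`. -/
def divCoeff : Ind m n → FaMon m n → ℂ
  | Sum.inl _, _ => 1
  | Sum.inr i, y => if y.2 i then 0 else (-1) ^ cntB y.2 i

/-- The coefficient of `lowerMon b y` in the derivative of the monomial `y` along `t_b`. -/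
def parCoeff : Ind m n → FaMon m n → ℂ
  | Sum.inl i, y => y.1 i
  | Sum.inr i, y => if y.2 i then (-1) ^ cntB y.2 i else 0

theorem exponent_injective : Function.Injective (exponent (m := m) (n := n)) := fun y z h =>
  Prod.ext (funext fun i => congrFun h (Sum.inl i)) <| funext fun i => by
    have hi := congrFun h (Sum.inr i)
    cases hy : y.2 i <;> cases hz : z.2 i <;> simp_all [exponent]

theorem exponent_raiseMon {b : Ind m n} {y : FaMon m n} (h : divCoeff b y ≠ 0) :
    exponent (raiseMon b y) = exponent y + Pi.single b 1 := by
  ext c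
  rcases b with i | i <;> rcases c with j | j
  · obtain rfl | hij := eq_or_ne j i <;> simp [exponent, raiseMon, *]
  · simp [exponent, raiseMon]
  · simp [exponent, raiseMon]
  · obtain rfl | hij := eq_or_ne j i <;> simp_all [exponent, raiseMon, divCoeff]

theorem exponent_lowerMon {b : Ind m n} {y : FaMon m n} (h : parCoeff b y ≠ 0) :
    exponent y = exponent (lowerMon b y) + Pi.single b 1 := by
  ext c
  rcases b with i | i <;> rcases c with j | j
  · obtain rfl | hij := eq_or_ne j i
    · have hj : 1 ≤ y.1 j := Nat.one_le_iff_ne_zero.2 (Nat.cast_ne_zero.1 h)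
      simp [exponent, lowerMon, hj, -Sum.elim_update_left]
    · simp [exponent, lowerMon, hij, -Sum.elim_update_left]
  · simp [exponent, lowerMon, -Sum.elim_update_left]
  · simp [exponent, lowerMon]
  · obtain rfl | hij := eq_or_ne j i <;> simp_all [exponent, lowerMon, parCoeff]

theorem parCoeff_eq_zero_iff {b : Ind m n} {y : FaMon m n} :
    parCoeff b y = 0 ↔ exponent y b = 0 := by
  rcases b with i | i <;> simp [parCoeff, exponent]

theorem cntB_update_self (x : Fin n → Bool) (i : Fin n) (c : Bool) :
    cntB (Function.update x i c) i = cntB x i := by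
  refine congrArg Finset.card (Finset.filter_congr fun j _ => and_congr_right fun hj => ?_)
  rw [Function.update_of_ne hj.ne]

theorem parCoeff_mul_divCoeff_lowerMon (b : Ind m n) (y : FaMon m n) :
    parCoeff b y * divCoeff b (lowerMon b y) = exponent y b := by
  rcases b with i | i
  · simp [parCoeff, divCoeff, exponent]
  · cases h : y.2 i <;> simp [parCoeff, divCoeff, exponent, lowerMon, cntB_update_self, h,
      ← mul_pow]

theorem raiseMon_lowerMon {b : Ind m n} {y : FaMon m n} (h : parCoeff b y ≠ 0) :
    raiseMon b (lowerMon b y) = y := by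
  have hdiv : divCoeff b (lowerMon b y) ≠ 0 := right_ne_zero_of_mul (a := parCoeff b y) <| by
    rw [parCoeff_mul_divCoeff_lowerMon, Nat.cast_ne_zero]
    exact parCoeff_eq_zero_iff.not.1 h
  exact exponent_injective ((exponent_raiseMon hdiv).trans (exponent_lowerMon h).symm)

theorem parCoeff_hwMon (b : Ind m n) : parCoeff b (hwMon m n) = 0 := by
  rw [parCoeff_eq_zero_iff]
  cases b <;> rfl

theorem eq_hwMon_of_forall_parCoeff {y : FaMon m n} (h : ∀ b, parCoeff b y = 0) :
    y = hwMon m n :=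
  exponent_injective <| funext fun b =>
    (parCoeff_eq_zero_iff.1 (h b)).trans (parCoeff_eq_zero_iff.1 (parCoeff_hwMon b)).symm

theorem degM_raiseMon {b : Ind m n} {y : FaMon m n} (h : divCoeff b y ≠ 0) :
    degM (raiseMon b y) = degM y + 1 := by
  simp [degM, exponent_raiseMon h, Finset.sum_add_distrib]

theorem degM_lowerMon {b : Ind m n} {y : FaMon m n} (h : parCoeff b y ≠ 0) :
    degM (lowerMon b y) + 1 = degM y := by
  simp [degM, exponent_lowerMon h, Finset.sum_add_distrib]

theorem degM_hwMon : degM (hwMon m n) = 0 := by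
  simp [degM, exponent, hwMon]

theorem parM_eq_sum (y : FaMon m n) : parM y = ∑ b, pI b * exponent y b := by
  rw [parM, cntA, Finset.card_filter, Fintype.sum_sum_type]
  simp [pI, exponent, Bool.toNat, Bool.cond_eq_ite]

theorem parM_raiseMon {b : Ind m n} {y : FaMon m n} (h : divCoeff b y ≠ 0) :
    parM (raiseMon b y) = parM y + pI b := by
  simp [parM_eq_sum, exponent_raiseMon h, mul_add, Finset.sum_add_distrib, Pi.single_apply]

theorem parM_lowerMon {b : Ind m n} {y : FaMon m n} (h : parCoeff b y ≠ 0) :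
    parM (lowerMon b y) + pI b = parM y := by
  simp [parM_eq_sum, exponent_lowerMon h, mul_add, Finset.sum_add_distrib, Pi.single_apply]

theorem parM_hwMon : parM (hwMon m n) = 0 := by
  simp [parM, cntA, hwMon]

end Monomials

section FunctionSpace

variable {m n : ℕ}

theorem mkOp_single_one {α M : Type} [AddCommGroup M] [Module ℂ M] (g : α → M) (x : α) :
    mkOp g (Finsupp.single x 1) = g x := by
  simp [mkOp]

/-- The monomial of total degree `k` whose part in the variables `t_b`, `b ∈ I`, is `y`. -/
def fiberMono (k : ℤ) (y : FaMon m n) : FSp m n := fmono (k - degM y, y)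

theorem fiberMono_ext {M : Type*} [AddCommMonoid M] [Module ℂ M] {f g : FSp m n →ₗ[ℂ] M}
    (h : ∀ k y, f (fiberMono k y) = g (fiberMono k y)) : f = g :=
  Finsupp.lhom_ext' fun x => LinearMap.ext_ring <| by
    simpa [fiberMono, fmono] using h (x.1 + degM x.2) x.2

theorem opDiv_fmono (b : Ind m n) (x : FMon m n) :
    opDiv b (fmono x) = divCoeff b x.2 • fmono (x.1 - 1, raiseMon b x.2) := by
  rcases b with i | i
  · exact (mkOp_single_one _ _).trans (one_smul _ _).symm
  · refine (mkOp_single_one _ _).trans ?_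
    simp only [divCoeff, raiseMon, ite_smul, zero_smul]

theorem opPar_emb_fmono (b : Ind m n) (x : FMon m n) :
    opPar (emb b) (fmono x) = parCoeff b x.2 • fmono (x.1 + 1, lowerMon b x.2) := by
  rcases b with i | i
  · exact mkOp_single_one _ _
  · refine (mkOp_single_one _ _).trans ?_
    simp only [parCoeff, lowerMon, ite_smul, zero_smul, id]

theorem opDiv_fiberMono (b : Ind m n) (k : ℤ) (y : FaMon m n) :
    opDiv b (fiberMono k y) = divCoeff b y • fiberMono k (raiseMon b y) := by
  rw [fiberMono, opDiv_fmono]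
  obtain h | h := eq_or_ne (divCoeff b y) 0
  · rw [h, zero_smul, zero_smul]
  · rw [fiberMono, degM_raiseMon h, Nat.cast_add_one, sub_add_eq_sub_sub]

theorem opPar_emb_fiberMono (b : Ind m n) (k : ℤ) (y : FaMon m n) :
    opPar (emb b) (fiberMono k y) = parCoeff b y • fiberMono k (lowerMon b y) := by
  rw [fiberMono, opPar_emb_fmono]
  obtain h | h := eq_or_ne (parCoeff b y) 0
  · rw [h, zero_smul, zero_smul]
  · rw [fiberMono, ← degM_lowerMon h, Nat.cast_add_one, sub_add_eq_sub_sub, sub_add_cancel]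

theorem opPar_emb_fiberMono_hwMon (b : Ind m n) (k : ℤ) :
    opPar (emb b) (fiberMono k (hwMon m n)) = 0 := by
  rw [opPar_emb_fiberMono, parCoeff_hwMon, zero_smul]

theorem opPar_z0_fiberMono (k : ℤ) (y : FaMon m n) :
    opPar z0 (fiberMono k y) = ((k : ℂ) - degM y) • fiberMono k y := by
  refine (mkOp_single_one _ _).trans ?_
  push_cast
  rfl

theorem forall_ind {motive : Ind (m + 1) n → Prop} :
    (∀ a, motive a) ↔ motive z0 ∧ ∀ b, motive (emb b) := by
  simp [z0, emb, Fin.forall_fin_succ, and_assoc]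

theorem sum_ind {M : Type*} [AddCommMonoid M] (f : Ind (m + 1) n → M) :
    ∑ a, f a = f z0 + ∑ b, f (emb b) := by
  simp [z0, emb, Fin.sum_univ_succ, add_assoc]

theorem pI_z0 : pI (z0 : Ind (m + 1) n) = 0 := rfl

theorem pI_emb (b : Ind m n) : pI (emb b) = pI b := by
  rcases b with i | i <;> rfl

theorem tdivB_emb (b : Ind m n) : tdivB (emb b) = tdiv b := by
  rcases b with i | i <;> rfl

theorem tdivB_z0 : tdivB (z0 : Ind (m + 1) n) = 1 := rfl

theorem En_fiberMono (k : ℤ) (y : FaMon m n) :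
    (En m n : Module.End ℂ (FSp m n)) (fiberMono k y) = (k : ℂ) • fiberMono k y := by
  have hemb (b : Ind m n) : (tdel (emb b) (emb b) : Module.End ℂ (FSp m n)) (fiberMono k y) =
      (exponent y b : ℂ) • fiberMono k y := by
    change (tdivB (emb b) : Module.End ℂ (FSp m n)) (opPar (emb b) (fiberMono k y)) = _
    rw [tdivB_emb, opPar_emb_fiberMono, map_smul]
    change _ • opDiv b _ = _
    rw [opDiv_fiberMono, smul_smul, parCoeff_mul_divCoeff_lowerMon]
    obtain h | h := eq_or_ne (parCoeff b y) 0
    · rw [parCoeff_eq_zero_iff.1 h, Nat.cast_zero, zero_smul, zero_smul]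
    · rw [raiseMon_lowerMon h]
  have hz : ((tdel z0 z0 : Dprime m n) : Module.End ℂ (FSp m n)) (fiberMono k y) =
      ((k : ℂ) - degM y) • fiberMono k y := by
    rw [tdel, tdivB_z0, one_mul]
    exact opPar_z0_fiberMono k y
  have hcoe : (En m n : Module.End ℂ (FSp m n)) = ∑ a : Ind (m + 1) n, ↑(tdel a a) :=
    map_sum (Dprime m n).val _ _
  rw [hcoe, sum_ind, LinearMap.add_apply, LinearMap.sum_apply, hz, Finset.sum_congr rfl
    fun b _ => hemb b, ← Finset.sum_smul, ← add_smul, degM, Nat.cast_sum, sub_add_cancel]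

theorem En_pow_fiberMono (j : ℕ) (k : ℤ) (y : FaMon m n) :
    ((En m n ^ j : Dprime m n) : Module.End ℂ (FSp m n)) (fiberMono k y) =
      (k : ℂ) ^ j • fiberMono k y := by
  rw [SubmonoidClass.coe_pow]
  induction j with
  | zero => simp
  | succ j ih =>
    rw [pow_succ, Module.End.mul_apply, En_fiberMono, map_smul, ih, smul_smul, pow_succ']

/-- The parity operator `f ↦ (-1)^{|f|} f` of `F`. -/
def parityOp : Module.End ℂ (FSp m n) := mkOp fun x => (-1 : ℂ) ^ parM x.2 • fmono x

theorem parityOp_fiberMono (k : ℤ) (y : FaMon m n) :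
    parityOp (fiberMono k y) = (-1 : ℂ) ^ parM y • fiberMono k y := mkOp_single_one _ _

theorem parityOp_mul_parityOp : parityOp * parityOp = (1 : Module.End ℂ (FSp m n)) := by
  refine fiberMono_ext fun k y => ?_
  rw [Module.End.mul_apply, parityOp_fiberMono, map_smul, parityOp_fiberMono, smul_smul, ← mul_pow,
    neg_one_mul, neg_neg, one_pow, one_smul, Module.End.one_apply]

theorem parityOp_mul_opDiv (b : Ind m n) :
    parityOp * opDiv b = (-1 : ℂ) ^ pI b • (opDiv b * parityOp) := by
  refine fiberMono_ext fun k y => ?_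
  simp only [Module.End.mul_apply, LinearMap.smul_apply, opDiv_fiberMono, parityOp_fiberMono,
    map_smul, smul_smul]
  obtain h | h := eq_or_ne (divCoeff b y) 0
  · simp only [h, mul_zero, zero_mul]
  · rw [parM_raiseMon h, pow_add]
    congr 1
    ring

theorem parityOp_mul_opPar (a : Ind (m + 1) n) :
    parityOp * opPar a = (-1 : ℂ) ^ pI a • (opPar a * parityOp) := by
  revert a
  refine forall_ind.2 ⟨?_, fun b => ?_⟩ <;> refine fiberMono_ext fun k y => ?_
  · simp only [Module.End.mul_apply, LinearMap.smul_apply, opPar_z0_fiberMono, parityOp_fiberMono,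
      map_smul, smul_smul]
    congr 1
    rw [pI_z0]
    ring
  · simp only [Module.End.mul_apply, LinearMap.smul_apply, opPar_emb_fiberMono, parityOp_fiberMono,
      map_smul, smul_smul, pI_emb]
    obtain h | h := eq_or_ne (parCoeff b y) 0
    · simp only [h, mul_zero, zero_mul]
    · congr 1
      rw [← parM_lowerMon h, pow_add]
      linear_combination -(parCoeff b y * (-1) ^ parM (lowerMon b y)) *
        (by rw [← mul_pow]; simp : (-1 : ℂ) ^ pI b * (-1) ^ pI b = 1)

end FunctionSpace

section DifferentialOperators

open Polynomial

variable {m n : ℕ}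

theorem Dprime.induction {motive : Dprime m n → Prop} (tdiv : ∀ b, motive (tdiv b))
    (tpar : ∀ a, motive (tpar a)) (algebraMap : ∀ c, motive (algebraMap ℂ _ c))
    (add : ∀ d d', motive d → motive d' → motive (d + d'))
    (mul : ∀ d d', motive d → motive d' → motive (d * d')) (d : Dprime m n) : motive d := by
  refine Algebra.adjoin_induction (p := fun x hx => motive ⟨x, hx⟩) ?_ algebraMap
    (fun x y _ _ => add _ _) (fun x y _ _ => mul _ _) d.2
  rintro x (⟨b, rfl⟩ | ⟨a, rfl⟩)
  exacts [tdiv b, tpar a]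

theorem En_commute (d : Dprime m n) : Commute (En m n) d := by
  induction d using Dprime.induction with
  | tdiv b =>
    refine Subtype.ext <| fiberMono_ext fun k y => ?_
    change (En m n).1 (opDiv b _) = opDiv b ((En m n).1 _)
    rw [En_fiberMono, opDiv_fiberMono, map_smul, map_smul, En_fiberMono, opDiv_fiberMono,
      smul_comm]
  | tpar a =>
    refine Subtype.ext <| fiberMono_ext fun k y => ?_
    change (En m n).1 (opPar a _) = opPar a ((En m n).1 _)
    revert a
    refine forall_ind.2 ⟨?_, fun b => ?_⟩
    · rw [En_fiberMono, opPar_z0_fiberMono, map_smul, map_smul, En_fiberMono,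
        opPar_z0_fiberMono, smul_comm]
    · rw [En_fiberMono, opPar_emb_fiberMono, map_smul, map_smul, En_fiberMono,
        opPar_emb_fiberMono, smul_comm]
  | algebraMap c => exact (Algebra.commutes c _).symm
  | add d d' hd hd' => exact hd.add_right hd'
  | mul d d' hd hd' => exact hd.mul_right hd'

/-- The element `∑ y, (f y).eval k • fiberMono k y` of `F`, of total degree `k`. -/
def fiberEval (k : ℤ) : (FaMon m n →₀ ℂ[X]) →ₗ[ℂ] FSp m n :=
  Finsupp.lsum ℂ fun y => (leval (k : ℂ)).smulRight (fiberMono k y)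

theorem fiberEval_single (k : ℤ) (y : FaMon m n) (p : ℂ[X]) :
    fiberEval k (Finsupp.single y p) = p.eval (k : ℂ) • fiberMono k y := by
  simp [fiberEval]

/-- The algebra of the operators on `F` preserving the total degree `k` whose matrix
coefficients with respect to `fiberMono k` are polynomial functions of `k`. -/
def polynomialOperators (m n : ℕ) : Subalgebra ℂ (Module.End ℂ (FSp m n)) where
  carrier := {d | ∀ f, ∃ g, ∀ k : ℤ, d (fiberEval k f) = fiberEval k g}
  algebraMap_mem' c f := ⟨c • f, fun k => ((fiberEval k).map_smul c f).symm⟩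
  add_mem' {d d'} hd hd' f := by
    obtain ⟨g, hg⟩ := hd f
    obtain ⟨g', hg'⟩ := hd' f
    exact ⟨g + g', fun k => by rw [LinearMap.add_apply, hg, hg', map_add]⟩
  mul_mem' {d d'} hd hd' f := by
    obtain ⟨g', hg'⟩ := hd' f
    obtain ⟨g, hg⟩ := hd g'
    exact ⟨g, fun k => by rw [Module.End.mul_apply, hg', hg]⟩

theorem mem_polynomialOperators {d : Module.End ℂ (FSp m n)} : d ∈ polynomialOperators m n ↔
    ∀ f, ∃ g, ∀ k : ℤ, d (fiberEval k f) = fiberEval k g := Iff.rfl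

theorem mem_polynomialOperators_of_fiberMono {d : Module.End ℂ (FSp m n)} (c : FaMon m n → ℂ[X])
    (z : FaMon m n → FaMon m n)
    (h : ∀ (k : ℤ) y, d (fiberMono k y) = (c y).eval (k : ℂ) • fiberMono k (z y)) :
    d ∈ polynomialOperators m n := by
  refine mem_polynomialOperators.2 fun f => ?_
  let matrix : (FaMon m n →₀ ℂ[X]) →ₗ[ℂ] FaMon m n →₀ ℂ[X] :=
    Finsupp.lsum ℂ fun y => Finsupp.lsingle (z y) ∘ₗ LinearMap.mulRight ℂ (c y)
  refine ⟨matrix f, fun k => LinearMap.congr_fun (f := d ∘ₗ fiberEval k)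
    (g := fiberEval k ∘ₗ matrix) (Finsupp.lhom_ext fun y p => ?_) f⟩
  simp [matrix, fiberEval_single, h, smul_smul, -Finsupp.single_mul]

theorem Dprime_le_polynomialOperators : Dprime m n ≤ polynomialOperators m n := by
  refine Algebra.adjoin_le ?_
  rintro _ (⟨b, rfl⟩ | ⟨a, rfl⟩)
  · exact mem_polynomialOperators_of_fiberMono (fun y => C (divCoeff b y)) (raiseMon b)
      fun k y => by rw [eval_C, opDiv_fiberMono]
  · revert a
    refine forall_ind.2 ⟨?_, fun b => ?_⟩
    · exact mem_polynomialOperators_of_fiberMono (fun y => X - C (degM y : ℂ)) id fun k y => by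
        rw [eval_sub, eval_X, eval_C, opPar_z0_fiberMono, id]
    · exact mem_polynomialOperators_of_fiberMono (fun y => C (parCoeff b y)) (lowerMon b)
        fun k y => by rw [eval_C, opPar_emb_fiberMono]

/-- The coefficient of `fiberMono k y`. -/
def fiberCoeff (k : ℤ) (y : FaMon m n) : FSp m n →ₗ[ℂ] ℂ := Finsupp.lapply (k - degM y, y)

theorem fiberCoeff_fiberMono (k k' : ℤ) (y y' : FaMon m n) :
    fiberCoeff k y (fiberMono k' y') = if k' = k ∧ y' = y then 1 else 0 := by
  refine (Finsupp.single_apply ..).trans (if_congr ?_ rfl rfl)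
  refine Prod.mk_inj.trans ⟨?_, ?_⟩ <;> rintro ⟨h, rfl⟩
  exacts [⟨sub_left_injective h, rfl⟩, ⟨by rw [h], rfl⟩]

theorem fiberCoeff_self (k : ℤ) (y : FaMon m n) : fiberCoeff k y (fiberMono k y) = 1 := by
  simp [fiberCoeff_fiberMono]

theorem fiberCoeff_fiberEval (k : ℤ) (y : FaMon m n) (f : FaMon m n →₀ ℂ[X]) :
    fiberCoeff k y (fiberEval k f) = (f y).eval (k : ℂ) := by
  induction f using Finsupp.induction_linear with
  | zero => simp
  | add f g hf hg => simp [hf, hg]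
  | single z p =>
    obtain rfl | h := eq_or_ne z y <;> simp [fiberEval_single, fiberCoeff_fiberMono, *]

theorem Dprime.exists_polynomial_fiberCoeff (d : Dprime m n) (y : FaMon m n) :
    ∃ p : ℂ[X], ∀ k : ℤ, fiberCoeff k y (d.1 (fiberMono k y)) = p.eval (k : ℂ) := by
  obtain ⟨g, hg⟩ :=
    mem_polynomialOperators.1 (Dprime_le_polynomialOperators d.2) (Finsupp.single y 1)
  refine ⟨g y, fun k => ?_⟩
  rw [← fiberCoeff_fiberEval, ← hg, fiberEval_single, eval_one, one_smul]

theorem fiberCoeff_lowerMon_opPar {b : Ind m n} {y : FaMon m n} (h : parCoeff b y ≠ 0) (k : ℤ) :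
    fiberCoeff k (lowerMon b y) ∘ₗ opPar (emb b) = parCoeff b y • fiberCoeff k y := by
  refine fiberMono_ext fun k' z => ?_
  rw [LinearMap.comp_apply, opPar_emb_fiberMono, map_smul, LinearMap.smul_apply,
    fiberCoeff_fiberMono, fiberCoeff_fiberMono]
  obtain rfl | hzy := eq_or_ne z y
  · simp only [and_true]
  · have hlower : parCoeff b z ≠ 0 → lowerMon b z ≠ lowerMon b y := fun hz hne =>
      hzy <| by rw [← raiseMon_lowerMon hz, hne, raiseMon_lowerMon h]
    by_cases hz : parCoeff b z = 0 <;> simp [hz, hzy, hlower]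

theorem fiberCoeff_En (k : ℤ) (y : FaMon m n) :
    fiberCoeff k y ∘ₗ (En m n).1 = (k : ℂ) • fiberCoeff k y := by
  refine fiberMono_ext fun k' z => ?_
  rw [LinearMap.comp_apply, En_fiberMono, map_smul, LinearMap.smul_apply, fiberCoeff_fiberMono]
  split_ifs with h
  · rw [h.1]
  · simp

variable {L : Type*} [AddCommGroup L] [Module ℂ L]

/-- The `L`-valued coefficient of `fiberMono k y` in an element of `F ⊗ L`. -/
def coord (k : ℤ) (y : FaMon m n) : FSp m n ⊗[ℂ] L →ₗ[ℂ] L :=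
  TensorProduct.lid ℂ L ∘ₗ (fiberCoeff k y).rTensor L

theorem coord_tmul (k : ℤ) (y : FaMon m n) (f : FSp m n) (v : L) :
    coord k y (f ⊗ₜ v) = fiberCoeff k y f • v := rfl

theorem coord_ext {w w' : FSp m n ⊗[ℂ] L} (h : ∀ k y, coord k y w = coord k y w') : w = w' := by
  refine (TensorProduct.finsuppScalarLeft ℂ L (FMon m n)).injective <| Finsupp.ext fun x => ?_
  rw [TensorProduct.finsuppScalarLeft_apply, TensorProduct.finsuppScalarLeft_apply]
  simpa [coord, fiberCoeff] using h (x.1 + degM x.2) x.2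

theorem coord_rTensor (k : ℤ) (y : FaMon m n) (d : Module.End ℂ (FSp m n))
    (w : FSp m n ⊗[ℂ] L) :
    coord k y (d.rTensor L w) = TensorProduct.lid ℂ L ((fiberCoeff k y ∘ₗ d).rTensor L w) := by
  rw [coord, LinearMap.rTensor_comp]
  rfl

theorem coord_lowerMon_opPar {b : Ind m n} {y : FaMon m n} (h : parCoeff b y ≠ 0) (k : ℤ)
    (w : FSp m n ⊗[ℂ] L) :
    coord k (lowerMon b y) ((opPar (emb b)).rTensor L w) = parCoeff b y • coord k y w := by
  rw [coord_rTensor, fiberCoeff_lowerMon_opPar h, LinearMap.rTensor_smul, LinearMap.smul_apply,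
    map_smul]
  rfl

theorem coord_En (k : ℤ) (y : FaMon m n) (w : FSp m n ⊗[ℂ] L) :
    coord k y ((En m n).1.rTensor L w) = (k : ℂ) • coord k y w := by
  rw [coord_rTensor, fiberCoeff_En, LinearMap.rTensor_smul, LinearMap.smul_apply,
    map_smul]
  rfl

theorem eq_fiberMono_tmul_coord {w : FSp m n ⊗[ℂ] L} {k : ℤ}
    (hpar : ∀ b, (opPar (emb b)).rTensor L w = 0)
    (hEn : (En m n).1.rTensor L w = (k : ℂ) • w) :
    w = fiberMono k (hwMon m n) ⊗ₜ coord k (hwMon m n) w := by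
  refine coord_ext fun k' y => ?_
  rw [coord_tmul, fiberCoeff_fiberMono]
  obtain hy | ⟨b, hb⟩ : y = hwMon m n ∨ ∃ b, parCoeff b y ≠ 0 :=
    or_iff_not_imp_right.2 fun h => eq_hwMon_of_forall_parCoeff (by simpa using h)
  · obtain rfl | hk := eq_or_ne k k'
    · simp [hy]
    · have hsmul := coord_En k' y w
      rw [hEn, map_smul, ← sub_eq_zero, ← sub_smul] at hsmul
      rw [(smul_eq_zero.1 hsmul).resolve_left (by simpa [sub_eq_zero] using hk)]
      simp [hk]
  · have hzero := coord_lowerMon_opPar hb k' w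
    rw [hpar, map_zero, eq_comm, smul_eq_zero] at hzero
    have hne : hwMon m n ≠ y := fun h => hb <| h ▸ parCoeff_hwMon b
    simp [hzero.resolve_left hb, hne]

end DifferentialOperators

section Action

theorem pow_mul_of_mul_eq_smul {R A : Type*} [CommSemiring R] [Semiring A] [Algebra R A]
    {P x : A} {c : R} (h : P * x = c • (x * P)) (N : ℕ) : P ^ N * x = c ^ N • (x * P ^ N) := by
  induction N with
  | zero => simp
  | succ N ih =>
    rw [pow_succ', mul_assoc, ih, mul_smul_comm, ← mul_assoc, h, smul_mul_assoc, smul_smul,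
      mul_assoc, pow_succ]

theorem eq_zero_of_forall_rTensor {R ι M N P : Type*} [CommRing R] [AddCommGroup M] [Module R M]
    [AddCommGroup N] [Module R N] [AddCommGroup P] [Module R P] [Module.Free R P]
    {f : ι → M →ₗ[R] N} (hf : ∀ x, (∀ i, f i x = 0) → x = 0) {t : M ⊗[R] P}
    (ht : ∀ i, (f i).rTensor P t = 0) : t = 0 := by
  classical
  let b := Module.Free.chooseBasis R P
  have hcoeff (i) (s : M ⊗[R] P) (j) :
      TensorProduct.equivFinsuppOfBasisRight b ((f i).rTensor P s) j =
        f i (TensorProduct.equivFinsuppOfBasisRight b s j) := by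
    induction s with
    | zero => simp
    | tmul x u => simp
    | add s s' hs hs' => simp [hs, hs']
  refine (TensorProduct.equivFinsuppOfBasisRight b).map_eq_zero_iff.1 <|
    Finsupp.ext fun j => hf _ fun i => ?_
  rw [← hcoeff, ht, map_zero, Finsupp.zero_apply]

namespace SuperTensor

variable {m n : ℕ} (ST : SuperTensor m n)

theorem induction {motive : ST.T → Prop} (mul : ∀ d u, motive (ST.inD d * ST.inU u))
    (add : ∀ X Y, motive X → motive Y → motive (X + Y)) (X : ST.T) : motive X := by
  obtain ⟨t, rfl⟩ := ST.equiv.surjective X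
  induction t with
  | zero => simpa using mul 0 0
  | tmul d u => exact ST.equiv_tmul d u ▸ mul d u
  | add s t hs ht => exact map_add ST.equiv s t ▸ add _ _ hs ht

section

variable {L : Type*} [AddCommGroup L] [Module ℂ L]
  (ρ : UEA (Ind m n) pI →ₐ[ℂ] Module.End ℂ L)

/-- The action of `D'(m|n)` on `F ⊗ L`. -/
def actD (L : Type*) [AddCommGroup L] [Module ℂ L] :
    Dprime m n →ₐ[ℂ] Module.End ℂ (FSp m n ⊗[ℂ] L) :=
  (Module.End.rTensorAlgHom ℂ (FSp m n) L).comp (Dprime m n).val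

theorem actD_apply (d : Dprime m n) : actD L d = d.1.rTensor L := rfl

/-- The action of `U(gl(m|n))` on `F ⊗ L`, with the Koszul sign `(-1)^{|u||f|}` for `u` moved
past `f ∈ F`. -/
def actU : UEA (Ind m n) pI →ₐ[ℂ] Module.End ℂ (FSp m n ⊗[ℂ] L) :=
  (Module.endTensorEndAlgHom (A := ℂ)).comp (UEA.parityTwist parityOp parityOp_mul_parityOp ρ)

theorem actU_gen (i j : Ind m n) :
    actU ρ (gen pI i j) = TensorProduct.map (parityOp ^ (pI i + pI j)) (ρ (gen pI i j)) := by
  rw [actU, AlgHom.comp_apply, UEA.parityTwist_gen]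
  rfl

theorem actU_fiberMono_tmul (u : UEA (Ind m n) pI) (k : ℤ) (y : FaMon m n) (v : L) :
    actU ρ u (fiberMono k y ⊗ₜ v) =
      fiberMono k y ⊗ₜ ρ ((UEA.parityAut _ _ ^ parM y) u) v := by
  induction u using UEA.induction generalizing v with
  | algebraMap c =>
    rw [AlgHom.commutes, AlgEquiv.commutes, AlgHom.commutes]
    exact (TensorProduct.tmul_smul c _ _).symm
  | gen i j =>
    have hpow (N : ℕ) : (parityOp ^ N : Module.End ℂ (FSp m n)) (fiberMono k y) =
        (-1 : ℂ) ^ (N * parM y) • fiberMono k y := by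
      induction N with
      | zero => simp
      | succ N ih =>
        rw [pow_succ', Module.End.mul_apply, ih, map_smul, parityOp_fiberMono, smul_smul,
          ← pow_add, add_one_mul]
    rw [actU_gen, TensorProduct.map_tmul, hpow, UEA.parityAut_pow_gen, map_smul,
      LinearMap.smul_apply, TensorProduct.smul_tmul]
  | mul u u' hu hu' => rw [map_mul, Module.End.mul_apply, hu', hu, map_mul, map_mul]; rfl
  | add u u' hu hu' =>
    rw [map_add, LinearMap.add_apply, hu, hu', map_add, map_add, LinearMap.add_apply,
      TensorProduct.tmul_add]

theorem actU_gen_mul_actD {i j : Ind m n} {d : Dprime m n} {q : ℕ}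
    (h : parityOp * d.1 = (-1 : ℂ) ^ q • (d.1 * parityOp)) :
    actU ρ (gen pI i j) * actD L d =
      (-1 : ℂ) ^ ((pI i + pI j) * q) • (actD L d * actU ρ (gen pI i j)) := by
  refine TensorProduct.ext' fun f v => ?_
  have hpow := LinearMap.congr_fun (pow_mul_of_mul_eq_smul (A := Module.End ℂ _) h (pI i + pI j)) f
  rw [← pow_mul, mul_comm q] at hpow
  simp only [actU_gen, actD_apply, Module.End.mul_apply, LinearMap.smul_apply,
    LinearMap.rTensor_tmul, TensorProduct.map_tmul, TensorProduct.smul_tmul'] at hpow ⊢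
  rw [hpow]

/-- The action of `D'(m|n) ⊗ U(gl(m|n))` on `F ⊗ L` as a linear map. -/
def actLinear : ST.T →ₗ[ℂ] Module.End ℂ (FSp m n ⊗[ℂ] L) :=
  TensorProduct.lift ((LinearMap.mul ℂ _).compl₁₂ (actD L).toLinearMap (actU ρ).toLinearMap) ∘ₗ
    ST.equiv.symm.toLinearMap

theorem actLinear_inD_mul_inU (d : Dprime m n) (u : UEA (Ind m n) pI) :
    ST.actLinear ρ (ST.inD d * ST.inU u) = actD L d * actU ρ u := by
  rw [← ST.equiv_tmul, actLinear, LinearMap.comp_apply, LinearEquiv.coe_coe,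
    LinearEquiv.symm_apply_apply]
  rfl

theorem actLinear_inU (u : UEA (Ind m n) pI) : ST.actLinear ρ (ST.inU u) = actU ρ u := by
  simpa using ST.actLinear_inD_mul_inU ρ 1 u

theorem actLinear_inD_mul (d : Dprime m n) (X : ST.T) :
    ST.actLinear ρ (ST.inD d * X) = actD L d * ST.actLinear ρ X := by
  induction X using ST.induction with
  | mul d' u => rw [← mul_assoc, ← map_mul, actLinear_inD_mul_inU, actLinear_inD_mul_inU, map_mul,
      mul_assoc]
  | add X Y hX hY => rw [mul_add, map_add, map_add, hX, hY, mul_add]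

theorem actLinear_inU_gen_mul (i j : Ind m n) (X : ST.T) :
    ST.actLinear ρ (ST.inU (gen pI i j) * X) =
      actU ρ (gen pI i j) * ST.actLinear ρ X := by
  have hstep {d : Dprime m n} {q : ℕ} (hop : parityOp * d.1 = (-1 : ℂ) ^ q • (d.1 * parityOp))
      (hd : ST.inU (gen pI i j) * ST.inD d =
        (-1 : ℂ) ^ ((pI i + pI j) * q) • (ST.inD d * ST.inU (gen pI i j))) (Y : ST.T)
      (hY : ST.actLinear ρ (ST.inU (gen pI i j) * Y) =
        actU ρ (gen pI i j) * ST.actLinear ρ Y) :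
      ST.actLinear ρ (ST.inU (gen pI i j) * (ST.inD d * Y)) =
        actU ρ (gen pI i j) * ST.actLinear ρ (ST.inD d * Y) := by
    rw [← mul_assoc, hd, smul_mul_assoc, mul_assoc, map_smul, actLinear_inD_mul, hY,
      actLinear_inD_mul, ← mul_assoc, ← mul_assoc, actU_gen_mul_actD ρ hop, smul_mul_assoc]
  induction X using ST.induction with
  | mul d u =>
    suffices ∀ Y, ST.actLinear ρ (ST.inU (gen pI i j) * Y) =
        actU ρ (gen pI i j) * ST.actLinear ρ Y →
        ST.actLinear ρ (ST.inU (gen pI i j) * (ST.inD d * Y)) =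
          actU ρ (gen pI i j) * ST.actLinear ρ (ST.inD d * Y) from
      this _ <| by rw [← map_mul, actLinear_inU, actLinear_inU, map_mul]
    induction d using Dprime.induction with
    | tdiv b => exact hstep (parityOp_mul_opDiv b) (ST.comm_div i j b)
    | tpar a => exact hstep (parityOp_mul_opPar a) (ST.comm_par i j a)
    | algebraMap c =>
      intro Y hY
      rw [AlgHom.commutes, ← Algebra.smul_def, mul_smul_comm, map_smul, map_smul, hY,
        mul_smul_comm]
    | add d d' hd hd' =>
      intro Y hY
      rw [map_add, add_mul, mul_add, map_add, map_add, hd Y hY, hd' Y hY, mul_add]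
    | mul d d' hd hd' =>
      intro Y hY
      rw [map_mul ST.inD, mul_assoc]
      exact hd _ (hd' _ hY)
  | add X Y hX hY => rw [mul_add, map_add, map_add, hX, hY, mul_add]

theorem actLinear_inU_mul (u : UEA (Ind m n) pI) (X : ST.T) :
    ST.actLinear ρ (ST.inU u * X) = actU ρ u * ST.actLinear ρ X := by
  induction u using UEA.induction generalizing X with
  | algebraMap c =>
    rw [AlgHom.commutes, AlgHom.commutes, ← Algebra.smul_def, ← Algebra.smul_def, map_smul]
  | gen i j => exact ST.actLinear_inU_gen_mul ρ i j X
  | mul u u' hu hu' => rw [map_mul ST.inU, mul_assoc, hu, hu', map_mul, mul_assoc]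
  | add u u' hu hu' => rw [map_add, add_mul, map_add, hu, hu', map_add, add_mul]

/-- The action of `D'(m|n) ⊗ U(gl(m|n))` on `F ⊗ L`. -/
def act : ST.T →ₐ[ℂ] Module.End ℂ (FSp m n ⊗[ℂ] L) :=
  AlgHom.ofLinearMap (ST.actLinear ρ) (by simpa using ST.actLinear_inU ρ 1) fun X Y => by
    induction X using ST.induction with
    | mul d u =>
      rw [mul_assoc, actLinear_inD_mul, actLinear_inU_mul, actLinear_inD_mul_inU, mul_assoc]
    | add X X' hX hX' => rw [add_mul, map_add, hX, hX', map_add, add_mul]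

theorem act_inD (d : Dprime m n) : ST.act ρ (ST.inD d) = d.1.rTensor L := by
  rw [← actD_apply, ← mul_one (ST.inD d), ← map_one ST.inU]
  exact (ST.actLinear_inD_mul_inU ρ d 1).trans (by rw [map_one, mul_one])

theorem act_inU (u : UEA (Ind m n) pI) : ST.act ρ (ST.inU u) = actU ρ u := ST.actLinear_inU ρ u

theorem act_inU_vacuum (u : UEA (Ind m n) pI) (k : ℤ) (v : L) :
    ST.act ρ (ST.inU u) (fiberMono k (hwMon m n) ⊗ₜ v) =
      fiberMono k (hwMon m n) ⊗ₜ ρ u v := by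
  rw [act_inU, actU_fiberMono_tmul, parM_hwMon]
  rfl

end

theorem act_lmul_injective : Function.Injective (ST.act (Algebra.lmul ℂ (UEA (Ind m n) pI))) := by
  refine (injective_iff_map_eq_zero _).2 fun X hX => ?_
  obtain ⟨t, rfl⟩ := ST.equiv.surjective X
  let ev (x : ℤ × FaMon m n) : Dprime m n →ₗ[ℂ] FSp m n :=
    LinearMap.applyₗ (fiberMono x.1 x.2) ∘ₗ (Dprime m n).val.toLinearMap
  have hev (d : Dprime m n) (hd : ∀ x, ev x d = 0) : d = 0 :=
    Subtype.ext <| fiberMono_ext fun k y => hd (k, y)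
  have hact (x : ℤ × FaMon m n) (s : Dprime m n ⊗[ℂ] UEA (Ind m n) pI) :
      ST.act (Algebra.lmul ℂ _) (ST.equiv s) (fiberMono x.1 x.2 ⊗ₜ 1) =
        (UEA.parityAut _ _ ^ parM x.2).toLinearMap.lTensor _ ((ev x).rTensor _ s) := by
    induction s with
    | zero => simp
    | tmul d u =>
      rw [ST.equiv_tmul, map_mul, Module.End.mul_apply, act_inU, actU_fiberMono_tmul, act_inD,
        Algebra.coe_lmul_eq_mul, LinearMap.mul_apply', mul_one]
      rfl
    | add s s' hs hs' => simp only [map_add, LinearMap.add_apply, hs, hs']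
  refine (map_eq_zero_iff _ ST.equiv.injective).2 <| eq_zero_of_forall_rTensor hev fun x =>
    (LinearEquiv.lTensor _ (UEA.parityAut _ _ ^ parM x.2).toLinearEquiv).injective ?_
  exact (hact x t).symm.trans (by rw [hX, map_zero]; rfl)

theorem inU_gen_commute_inD_En (i j : Ind m n) :
    Commute (ST.inU (gen pI i j)) (ST.inD (En m n)) := by
  have hdivB (a : Ind (m + 1) n) : ST.inU (gen pI i j) * ST.inD (tdivB a) =
      (-1 : ℂ) ^ ((pI i + pI j) * pI a) • (ST.inD (tdivB a) * ST.inU (gen pI i j)) := by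
    revert a
    refine forall_ind.2 ⟨?_, fun b => ?_⟩
    · simp [tdivB_z0, pI_z0]
    · rw [tdivB_emb, ST.comm_div, pI_emb]
  rw [En, map_sum]
  refine Commute.sum_right _ _ _ fun a _ => ?_
  rw [tdel, map_mul, Commute, SemiconjBy, ← mul_assoc, hdivB, smul_mul_assoc, mul_assoc,
    ST.comm_par, mul_smul_comm, smul_smul, ← mul_pow, neg_one_mul, neg_neg, one_pow, one_smul,
    mul_assoc]

theorem inD_En_mem_center : ST.inD (En m n) ∈ Subalgebra.center ℂ ST.T := by
  have hU (u : UEA (Ind m n) pI) : Commute (ST.inU u) (ST.inD (En m n)) := by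
    induction u using UEA.induction with
    | algebraMap c => rw [AlgHom.commutes]; exact Algebra.commutes c _
    | gen i j => exact ST.inU_gen_commute_inD_En i j
    | mul u u' hu hu' => rw [map_mul]; exact hu.mul_left hu'
    | add u u' hu hu' => rw [map_add]; exact hu.add_left hu'
  refine Subalgebra.mem_center_iff.2 fun X => ?_
  induction X using ST.induction with
  | mul d u => exact ((En_commute d).symm.map ST.inD).mul_left (hU u)
  | add X Y hX hY => rw [add_mul, mul_add, hX, hY]

end SuperTensor

end Action

section Centralizer

theorem polynomialModule_eq_zero_of_infinite {K V : Type*} [Field K] [AddCommGroup V]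
    [Module K V] {s : Set K} (hs : s.Infinite) {q : PolynomialModule K V}
    (hq : ∀ r ∈ s, PolynomialModule.eval r q = 0) : q = 0 := by
  refine PolynomialModule.ext <| Finsupp.ext fun j => ?_
  refine (Module.forall_dual_apply_eq_zero_iff K _).1 fun ξ => ?_
  let qξ := PolynomialModule.map K ξ q
  let p := PolynomialModule.equivPolynomialSelf qξ
  have heval (r : K) : p.eval r = ξ (PolynomialModule.eval r q) := by
    clear hq
    induction q using PolynomialModule.induction_linear with
    | zero => simp [p, qξ]
    | add q q' hq hq' => simp_all [p, qξ]
    | single i v => simp [p, qξ, mul_comm]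
  have hp : p = 0 := Polynomial.eq_zero_of_infinite_isRoot p <| hs.mono fun r hr =>
    (heval r).trans (by rw [hq r hr, map_zero])
  have hqξ : qξ = 0 := PolynomialModule.equivPolynomialSelf.map_eq_zero_iff.1 hp
  exact congrArg (fun f => f.coeff j) hqξ

theorem commute_coeff_of_forall_commute_eval {K A : Type*} [Field K] [Ring A] [Algebra K A]
    {s : Set K} (hs : s.Infinite) {q : PolynomialModule K A} {a : A}
    (h : ∀ r ∈ s, Commute a (PolynomialModule.eval r q)) (j : ℕ) : Commute a (q.coeff j) := by
  let ad : A →ₗ[K] A := LinearMap.mulLeft K a - LinearMap.mulRight K a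
  have had : PolynomialModule.map K ad q = 0 :=
    polynomialModule_eq_zero_of_infinite hs fun r hr => by
      rw [PolynomialModule.eval_map']
      exact sub_eq_zero.2 (h r hr)
  exact sub_eq_zero.1 (congrArg (fun f => f.coeff j) had)

namespace SuperTensor

variable {m n : ℕ} (ST : SuperTensor m n)

theorem exists_polynomial_coord_act_lmul (X : ST.T) :
    ∃ Y : PolynomialModule ℂ (UEA (Ind m n) pI), ∀ (k : ℤ) u,
      coord k (hwMon m n) (ST.act (Algebra.lmul ℂ _) X (fiberMono k (hwMon m n) ⊗ₜ u)) =
        Y.eval (k : ℂ) * u := by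
  induction X using ST.induction with
  | mul d u =>
    obtain ⟨p, hp⟩ := Dprime.exists_polynomial_fiberCoeff d (hwMon m n)
    refine ⟨p • PolynomialModule.single ℂ 0 u, fun k v => ?_⟩
    rw [map_mul, Module.End.mul_apply, act_inU_vacuum, act_inD, LinearMap.rTensor_tmul,
      coord_tmul, hp, PolynomialModule.eval_smul, PolynomialModule.eval_single, pow_zero, one_smul,
      smul_mul_assoc]
    rfl
  | add X X' hX hX' =>
    obtain ⟨Y, hY⟩ := hX
    obtain ⟨Y', hY'⟩ := hX'
    exact ⟨Y + Y', fun k u => by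
      rw [map_add, LinearMap.add_apply, map_add, hY, hY', map_add, add_mul]⟩

section

variable {ST} {L : Type*} [AddCommGroup L] [Module ℂ L]
  (ρ : UEA (Ind m n) pI →ₐ[ℂ] Module.End ℂ L) {X : ST.T}

theorem act_inD_tdel_vacuum (a : Ind (m + 1) n) (b : Ind m n) (k : ℤ) (v : L) :
    ST.act ρ (ST.inD (tdel a (emb b))) (fiberMono k (hwMon m n) ⊗ₜ v) = 0 := by
  rw [act_inD, LinearMap.rTensor_tmul]
  change ((tdivB a).1 (opPar (emb b) _)) ⊗ₜ v = 0
  rw [opPar_emb_fiberMono_hwMon, map_zero, TensorProduct.zero_tmul]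

theorem act_gl_vacuum (a b : Ind m n) (k : ℤ) (v : L) :
    ST.act ρ (ST.inD (tdel (emb a) (emb b)) + ST.inU (gen pI a b))
        (fiberMono k (hwMon m n) ⊗ₜ v) =
      fiberMono k (hwMon m n) ⊗ₜ ρ (gen pI a b) v := by
  rw [map_add, LinearMap.add_apply, act_inD_tdel_vacuum, act_inU_vacuum, zero_add]

theorem act_inD_En_pow_mul_inU {z : UEA (Ind m n) pI}
    (hz : z ∈ Subalgebra.center ℂ (UEA (Ind m n) pI)) (j : ℕ) (k : ℤ) (y : FaMon m n) (v : L) :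
    ST.act ρ (ST.inD (En m n ^ j) * ST.inU z) (fiberMono k y ⊗ₜ v) =
      fiberMono k y ⊗ₜ ((k : ℂ) ^ j • ρ z v) := by
  rw [map_mul, Module.End.mul_apply, act_inU, actU_fiberMono_tmul,
    UEA.parityAut_pow_of_mem_center hz, act_inD, LinearMap.rTensor_tmul, En_pow_fiberMono,
    TensorProduct.smul_tmul]

theorem rTensor_act {d : Dprime m n} (h : Commute (ST.inD d) X) (w : FSp m n ⊗[ℂ] L) :
    d.1.rTensor L (ST.act ρ X w) = ST.act ρ X (d.1.rTensor L w) := by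
  rw [← act_inD]
  exact LinearMap.congr_fun (h.map (ST.act ρ)) w

theorem rTensor_En_act_fiberMono (k : ℤ) (y : FaMon m n) (v : L) :
    (En m n).1.rTensor L (ST.act ρ X (fiberMono k y ⊗ₜ v)) =
      (k : ℂ) • ST.act ρ X (fiberMono k y ⊗ₜ v) := by
  have hE : Commute (ST.inD (En m n)) X :=
    (Subalgebra.mem_center_iff.1 ST.inD_En_mem_center X).symm
  rw [rTensor_act ρ hE, LinearMap.rTensor_tmul, En_fiberMono, ← TensorProduct.smul_tmul', map_smul]

theorem act_vacuum (hpar : ∀ b, Commute (ST.inD (tpar (emb b))) X) (k : ℤ) (v : L) :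
    ST.act ρ X (fiberMono k (hwMon m n) ⊗ₜ v) = fiberMono k (hwMon m n) ⊗ₜ
      coord k (hwMon m n) (ST.act ρ X (fiberMono k (hwMon m n) ⊗ₜ v)) := by
  refine eq_fiberMono_tmul_coord (fun b => ?_) (rTensor_En_act_fiberMono ρ k _ v)
  refine (rTensor_act ρ (hpar b) _).trans ?_
  rw [LinearMap.rTensor_tmul]
  change ST.act ρ X (opPar (emb b) _ ⊗ₜ v) = 0
  rw [opPar_emb_fiberMono_hwMon, TensorProduct.zero_tmul, map_zero]

theorem act_fiberMono (hpar : ∀ a, Commute (ST.inD (tpar a)) X) {k : ℤ} {v v' : L}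
    (hvac : ST.act ρ X (fiberMono k (hwMon m n) ⊗ₜ v) = fiberMono k (hwMon m n) ⊗ₜ v')
    (y : FaMon m n) : ST.act ρ X (fiberMono k y ⊗ₜ v) = fiberMono k y ⊗ₜ v' := by
  induction hd : degM y using Nat.strong_induction_on generalizing y with
  | _ N ih =>
  subst hd
  obtain rfl | hy := eq_or_ne y (hwMon m n)
  · exact hvac
  set w := ST.act ρ X (fiberMono k y ⊗ₜ v) - fiberMono k y ⊗ₜ v' with hw
  have hw_par (a : Ind (m + 1) n) : (opPar a).rTensor L w =
      ST.act ρ X (opPar a (fiberMono k y) ⊗ₜ v) - opPar a (fiberMono k y) ⊗ₜ v' := by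
    rw [hw, map_sub, LinearMap.rTensor_tmul]
    exact congrArg (· - _) (rTensor_act ρ (hpar a) _)
  have hw_emb (b : Ind m n) : (opPar (emb b)).rTensor L w = 0 := by
    rw [hw_par, opPar_emb_fiberMono, ← TensorProduct.smul_tmul', ← TensorProduct.smul_tmul',
      map_smul]
    obtain hb | hb := eq_or_ne (parCoeff b y) 0
    · rw [hb, zero_smul, zero_smul, sub_self]
    · rw [ih _ (by rw [← degM_lowerMon hb]; exact Nat.lt_succ_self _) _ rfl, sub_self]
  have hw_En : (En m n).1.rTensor L w = (k : ℂ) • w := by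
    rw [hw, map_sub, rTensor_En_act_fiberMono, LinearMap.rTensor_tmul, En_fiberMono,
      ← TensorProduct.smul_tmul', smul_sub]
  have hw_z0 : (opPar z0).rTensor L w = ((k : ℂ) - degM y) • w := by
    rw [hw_par, opPar_z0_fiberMono, ← TensorProduct.smul_tmul', ← TensorProduct.smul_tmul',
      map_smul, hw, smul_sub]
  have hw_z0' : (opPar z0).rTensor L w = (k : ℂ) • w := by
    rw [eq_fiberMono_tmul_coord hw_emb hw_En, LinearMap.rTensor_tmul, opPar_z0_fiberMono,
      degM_hwMon, Nat.cast_zero, sub_zero, TensorProduct.smul_tmul']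
  have hdeg : (degM y : ℂ) • w = 0 := by
    rw [← sub_sub_cancel (k : ℂ) (degM y : ℂ), sub_smul _ _ w, ← hw_z0, ← hw_z0', sub_self]
  refine sub_eq_zero.1 <| (smul_eq_zero.1 hdeg).resolve_left fun h => hy ?_
  refine eq_hwMon_of_forall_parCoeff fun b => by_contra fun hb => ?_
  have := degM_lowerMon hb
  rw [Nat.cast_eq_zero.1 h] at this
  exact Nat.succ_ne_zero _ this

end

variable {ST}

theorem mem_Zc_of_commute {X : ST.T} (hpar : ∀ a, Commute (ST.inD (tpar a)) X)
    (hgl : ∀ a b : Ind m n,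
      Commute (ST.inD (tdel (emb a) (emb b)) + ST.inU (gen pI a b)) X) : X ∈ Zc ST := by
  obtain ⟨Y, hY⟩ := ST.exists_polynomial_coord_act_lmul X
  have hvac (k : ℤ) (u) : ST.act (Algebra.lmul ℂ _) X (fiberMono k (hwMon m n) ⊗ₜ u) =
      fiberMono k (hwMon m n) ⊗ₜ (Y.eval (k : ℂ) * u) := by
    rw [← hY]
    exact act_vacuum _ (fun b => hpar (emb b)) k u
  have hcomm (k : ℤ) (a b : Ind m n) : Commute (gen pI a b) (Y.eval (k : ℂ)) := by
    have h := LinearMap.congr_fun ((hgl a b).map (ST.act (Algebra.lmul ℂ _)))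
      (fiberMono k (hwMon m n) ⊗ₜ 1)
    rw [Module.End.mul_apply, Module.End.mul_apply, act_gl_vacuum, hvac, hvac, act_gl_vacuum] at h
    exact show _ = _ by simpa [coord_tmul, fiberCoeff_self] using congrArg (coord k (hwMon m n)) h
  have hcenter (j : ℕ) : Y.coeff j ∈ Subalgebra.center ℂ (UEA (Ind m n) pI) :=
    UEA.mem_center_of_forall_gen fun a b => commute_coeff_of_forall_commute_eval
      (Set.infinite_range_of_injective (Int.cast_injective (α := ℂ)))
      (Set.forall_mem_range.2 fun k => hcomm k a b) j
  have hX : X = Y.coeff.sum fun j u => ST.inD (En m n ^ j) * ST.inU u := by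
    refine ST.act_lmul_injective <| TensorProduct.ext <| fiberMono_ext fun k y =>
      LinearMap.ext fun u => ?_
    change ST.act _ X (fiberMono k y ⊗ₜ u) = ST.act _ _ (fiberMono k y ⊗ₜ u)
    rw [act_fiberMono _ hpar (hvac k u), PolynomialModule.eval_apply, Finsupp.sum, Finsupp.sum,
      Finset.sum_mul, TensorProduct.tmul_sum, map_sum, LinearMap.sum_apply]
    refine Finset.sum_congr rfl fun j _ => ?_
    rw [act_inD_En_pow_mul_inU _ (hcenter j), smul_mul_assoc]
    rfl
  rw [hX]
  exact Submodule.sum_mem _ fun j _ => Submodule.subset_span ⟨j, _, hcenter j, rfl⟩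

end SuperTensor

theorem IsPhi.map_mem_Zc {m n : ℕ} {ST : SuperTensor m n} {R : ST.T}
    (hR : R ∈ Subalgebra.center ℂ ST.T) {φ : UEA (Ind (m + 1) n) pI →ₐ[ℂ] ST.T}
    (hφ : IsPhi ST R φ) {z : UEA (Ind (m + 1) n) pI}
    (hz : z ∈ Subalgebra.center ℂ (UEA (Ind (m + 1) n) pI)) : φ z ∈ Zc ST := by
  obtain ⟨hφ_gl, -, hφ_z0, hφ_z0_z0⟩ := hφ
  have hcomm (g) : Commute (φ g) (φ z) :=
    (show Commute g z from Subalgebra.mem_center_iff.1 hz g).map φ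
  have hRz : Commute R (φ z) := (Subalgebra.mem_center_iff.1 hR (φ z)).symm
  have htdel (b : Ind (m + 1) n) : (tdel z0 b : Dprime m n) = tpar b := one_mul _
  refine SuperTensor.mem_Zc_of_commute (forall_ind.2 ⟨?_, fun b => ?_⟩) fun a b => ?_
  · simpa [hφ_z0_z0, htdel] using (hcomm (gen pI z0 z0)).sub_left hRz
  · simpa [hφ_z0, htdel] using hcomm (gen pI z0 (emb b))
  · have hRab : Commute (if a = b then ((-1 : ℂ) ^ (pI a * pI b)) • R else 0) (φ z) := by
      split_ifs
      exacts [hRz.smul_left _, Commute.zero_left _]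
    simpa [hφ_gl] using (hcomm (gen pI (emb a) (emb b))).sub_left hRab

end Centralizer

section HarishChandra

open MvPolynomial

theorem mvPolynomial_funext_of_mem {R σ : Type*} [CommRing R] [IsDomain R] {s : Set R}
    (hs : s.Infinite) (i₀ : σ) {p q : MvPolynomial σ R}
    (h : ∀ x : σ → R, x i₀ ∈ s → eval x p = eval x q) : p = q := by
  classical
  refine funext_set (fun i => if i = i₀ then s else Set.univ) (fun i => ?_) fun x hx => ?_
  · split_ifs
    exacts [hs, hs.mono (Set.subset_univ s)]
  · exact h x (by simpa using hx i₀ (Set.mem_univ i₀))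

variable {m n : ℕ}

theorem not_iltI_self (i : Ind m n) : ¬iltI i i := fun h =>
  lt_irrefl _ (iltI_iff_indexPos_lt.1 h)

theorem not_iltI_emb_z0 (a : Ind m n) : ¬iltI (emb a) z0 := by
  cases a <;> simp [iltI, emb, z0]

theorem iltI_emb_emb {a b : Ind m n} : iltI (emb a) (emb b) ↔ iltI a b := by
  rcases a with a | a <;> rcases b with b | b <;> simp [iltI, emb]

theorem lamTilde_emb (a r : ℂ) (lam : Ind m n → ℂ) (i : Ind m n) :
    lamTilde a r lam (emb i) = lam i + (-1) ^ (pI i * pI i) * r := by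
  rcases i with i | i <;> simp [lamTilde, emb, pI, sub_eq_add_neg]

/-- The substitution `ℓ₀ ↦ ℓ₀ + ℓ + m + 1`, `ℓᵢ ↦ ℓᵢ ± ℓ` of the variables which defines `τ`. -/
def tauVar (ℓ : MvPolynomial (Ind (m + 1) n) ℂ) : Ind (m + 1) n → MvPolynomial (Ind (m + 1) n) ℂ :=
  Sum.elim (Fin.cases (X z0 + ℓ + C ((m : ℂ) + 1)) fun k => X (Sum.inl k.succ) + ℓ)
    fun k => X (Sum.inr k) - ℓ

theorem eval_tauVar (ℓ : MvPolynomial (Ind (m + 1) n) ℂ) (x : Ind (m + 1) n → ℂ)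
    (i : Ind (m + 1) n) :
    eval x (tauVar ℓ i) =
      lamTilde (x z0) (eval x ℓ) (fun i => x (emb i) - rhoS i) i + rhoS i := by
  revert i
  refine forall_ind.2 ⟨?_, fun b => ?_⟩
  · simp [tauVar, lamTilde, rhoS, z0]
  · rcases b with b | b <;> simp [tauVar, lamTilde, rhoS, emb] <;> ring

/-- `χ₀` is the map `E ^ k ⊗ z ↦ ℓ₀ ^ k ⊗ χ z`. -/
def IsHarishChandraExtension {ST : SuperTensor m n}
    (χ : Subalgebra.center ℂ (UEA (Ind m n) pI) → MvPolynomial (Ind m n) ℂ)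
    (χ₀ : Zc ST →ₗ[ℂ] MvPolynomial (Ind (m + 1) n) ℂ) : Prop :=
  ∀ (k : ℕ) (z : UEA (Ind m n) pI) (hz : z ∈ Subalgebra.center ℂ (UEA (Ind m n) pI)),
    χ₀ ⟨ST.inD (En m n ^ k) * ST.inU z, Submodule.subset_span ⟨k, z, hz, rfl⟩⟩ =
      X z0 ^ k * rename emb (χ ⟨z, hz⟩)

variable {ST : SuperTensor m n} {L : Type} [AddCommGroup L] [Module ℂ L]
  {ρ : UEA (Ind m n) pI →ₐ[ℂ] Module.End ℂ L} {v : L}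
  {χ : Subalgebra.center ℂ (UEA (Ind m n) pI) → MvPolynomial (Ind m n) ℂ}
  {χ₀ : Zc ST →ₗ[ℂ] MvPolynomial (Ind (m + 1) n) ℂ}

theorem IsHighestWeight.act_vacuum_of_mem_Zc {x : Ind (m + 1) n → ℂ} {k : ℤ} (hx : x z0 = k)
    (hv : IsHighestWeight ρ (fun i => x (emb i) - rhoS i) v) (hχ : IsHarishChandra χ)
    (hχ₀ : IsHarishChandraExtension χ χ₀) {T : ST.T} (hT : T ∈ Zc ST) :
    ST.act ρ T (fiberMono k (hwMon m n) ⊗ₜ v) =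
      eval x (χ₀ ⟨T, hT⟩) • (fiberMono k (hwMon m n) ⊗ₜ v) := by
  have hT' : T ∈ Submodule.span ℂ _ := hT
  induction hT' using Submodule.span_induction with
  | mem T h =>
    obtain ⟨j, z, hz, rfl⟩ := h
    rw [hχ₀ _ _ hz, SuperTensor.act_inD_En_pow_mul_inU ρ hz, hv.center_apply hχ ⟨z, hz⟩]
    simp only [sub_add_cancel, map_mul, map_pow, eval_X, eval_rename, hx, smul_smul,
      TensorProduct.tmul_smul]
    rfl
  | zero => rw [show χ₀ ⟨0, hT⟩ = 0 from map_zero χ₀, map_zero, map_zero, zero_smul]; rfl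
  | add T T' hT₁ hT₂ ih ih' =>
    have hadd : χ₀ ⟨T + T', hT⟩ = χ₀ ⟨T, hT₁⟩ + χ₀ ⟨T', hT₂⟩ := map_add χ₀ ⟨T, hT₁⟩ ⟨T', hT₂⟩
    rw [hadd, map_add, map_add, LinearMap.add_apply, ih hT₁, ih' hT₂, add_smul]
  | smul c T hT₁ ih =>
    have hsmul : χ₀ ⟨c • T, hT⟩ = c • χ₀ ⟨T, hT₁⟩ := map_smul χ₀ c ⟨T, hT₁⟩
    rw [hsmul, map_smul, LinearMap.smul_apply, ih hT₁, smul_eval, smul_smul]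

theorem IsHighestWeight.vacuum_tmul {lam : Ind m n → ℂ} (hv : IsHighestWeight ρ lam v) {R : ST.T}
    {φ : UEA (Ind (m + 1) n) pI →ₐ[ℂ] ST.T} (hφ : IsPhi ST R φ) {k : ℤ} {r : ℂ}
    (hr : ST.act ρ R (fiberMono k (hwMon m n) ⊗ₜ v) = r • (fiberMono k (hwMon m n) ⊗ₜ v)) :
    IsHighestWeight ((ST.act ρ).comp φ) (lamTilde k r lam) (fiberMono k (hwMon m n) ⊗ₜ v) := by
  obtain ⟨hφ_gl, -, hφ_z0, hφ_z0_z0⟩ := hφ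
  constructor
  · refine forall_ind.2 ⟨?_, fun a => ?_⟩ <;> refine forall_ind.2 ⟨?_, fun b => ?_⟩ <;> intro hlt
    · exact absurd hlt (not_iltI_self _)
    · rw [AlgHom.comp_apply, hφ_z0, SuperTensor.act_inD_tdel_vacuum]
    · exact absurd hlt (not_iltI_emb_z0 a)
    · have hab := iltI_emb_emb.1 hlt
      have hne : a ≠ b := fun h => not_iltI_self b (h ▸ hab)
      rw [AlgHom.comp_apply, hφ_gl, if_neg hne, add_zero, SuperTensor.act_gl_vacuum,
        hv.raising a b hab, TensorProduct.tmul_zero]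
  · refine forall_ind.2 ⟨?_, fun a => ?_⟩
    · have htdel : (tdel z0 z0 : Dprime m n) = tpar z0 := one_mul _
      rw [AlgHom.comp_apply, hφ_z0_z0, map_add, LinearMap.add_apply, hr, htdel,
        SuperTensor.act_inD, LinearMap.rTensor_tmul]
      change opPar z0 _ ⊗ₜ v + _ = (k + r) • _
      rw [opPar_z0_fiberMono, degM_hwMon, Nat.cast_zero, sub_zero, ← TensorProduct.smul_tmul',
        add_smul]
    · rw [AlgHom.comp_apply, hφ_gl, if_pos rfl, map_add, LinearMap.add_apply,
        SuperTensor.act_gl_vacuum, hv.weight, map_smul, LinearMap.smul_apply, hr, lamTilde_emb,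
        TensorProduct.tmul_smul, smul_smul, add_smul]

theorem eval_harishChandra_map {R : ST.T} (hR : R ∈ Zc ST)
    {φ : UEA (Ind (m + 1) n) pI →ₐ[ℂ] ST.T} (hφ : IsPhi ST R φ)
    {χ' : Subalgebra.center ℂ (UEA (Ind (m + 1) n) pI) → MvPolynomial (Ind (m + 1) n) ℂ}
    (hχ : IsHarishChandra χ) (hχ' : IsHarishChandra χ') (hχ₀ : IsHarishChandraExtension χ χ₀)
    (z : Subalgebra.center ℂ (UEA (Ind (m + 1) n) pI)) (hz : φ z ∈ Zc ST)
    {x : Ind (m + 1) n → ℂ} {k : ℤ} (hx : x z0 = k) :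
    eval x (χ₀ ⟨φ z, hz⟩) = eval x (aeval (tauVar (χ₀ ⟨R, hR⟩)) (χ' z)) := by
  obtain ⟨L, _, _, ρ, v, hv_ne, hv⟩ :=
    exists_ne_zero_isHighestWeight fun i : Ind m n => x (emb i) - rhoS i
  have hφz := hv.act_vacuum_of_mem_Zc hx hχ hχ₀ hz
  have hχ'z := (hv.vacuum_tmul hφ (hv.act_vacuum_of_mem_Zc hx hχ hχ₀ hR)).center_apply hχ' z
  have hsmul := congrArg (coord k (hwMon m n)) (hφz.symm.trans hχ'z)
  rw [map_smul, map_smul, coord_tmul, fiberCoeff_self, one_smul] at hsmul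
  calc eval x (χ₀ ⟨φ z, hz⟩)
      = eval (fun i => eval x (tauVar (χ₀ ⟨R, hR⟩) i)) (χ' z) := by
        simpa only [eval_tauVar, hx] using smul_left_injective ℂ hv_ne hsmul
    _ = eval x (aeval (tauVar (χ₀ ⟨R, hR⟩)) (χ' z)) := by
        simp only [← aeval_eq_eval, comp_aeval_apply]

end HarishChandra

/-- Theorem 5.2.  The restriction of `φ_R` to the center satisfies
`φ_R|_{Z(U(gl(m+1|n)))} = χ_{0,m|n}^{−1} ∘ τ ∘ χ_{m+1|n}`; in particular the image of the
center lands in `ℂ[E] ⊗ Z(U(gl(m|n)))` and the Harish-Chandra square commutes.  The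
Harish-Chandra homomorphisms `χ_{m|n}`, `χ_{m+1|n}` are characterized by their defining
property (`z` acts on the Verma module `M(λ)` by `ev_{λ+ρ}(χ(z))`), `χ_{0,m|n}` by its values
on `E^k ⊗ z`, and `τ` is the substitution
`p ↦ p(ℓ_0+ℓ+m+1, ℓ_1+ℓ, …, ℓ_m+ℓ, ℓ_{1̄}−ℓ, …, ℓ_{n̄}−ℓ)` with `ℓ = χ_{0,m|n}(R)`. -/
theorem stmt11 (m n : ℕ) (ST : SuperTensor m n) (R : ST.T)
    (hR : R ∈ Subalgebra.center ℂ ST.T) (hRZ : R ∈ Zc ST)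
    (φ : UEA (Ind (m+1) n) pI →ₐ[ℂ] ST.T) (hφ : IsPhi ST R φ)
    (χs : Subalgebra.center ℂ (UEA (Ind m n) pI) →ₐ[ℂ] MvPolynomial (Ind m n) ℂ)
    (hχs : ∀ (z : Subalgebra.center ℂ (UEA (Ind m n) pI)) (lam : Ind m n → ℂ)
      (V : VermaM m n lam) (x : V.L),
      V.ρ (z : UEA (Ind m n) pI) x =
        (MvPolynomial.eval (fun i => lam i + rhoS (m := m) (n := n) i) (χs z)) • x)
    (χb : Subalgebra.center ℂ (UEA (Ind (m+1) n) pI) →ₐ[ℂ] MvPolynomial (Ind (m+1) n) ℂ)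
    (hχb : ∀ (z : Subalgebra.center ℂ (UEA (Ind (m+1) n) pI)) (lam : Ind (m+1) n → ℂ)
      (V : VermaM (m+1) n lam) (x : V.L),
      V.ρ (z : UEA (Ind (m+1) n) pI) x =
        (MvPolynomial.eval (fun i => lam i + rhoS (m := m+1) (n := n) i) (χb z)) • x)
    (χ0 : Zc ST →ₗ[ℂ] MvPolynomial (Ind (m+1) n) ℂ)
    (hχ0 : ∀ (k : ℕ) (z : UEA (Ind m n) pI)
      (hz : z ∈ Subalgebra.center ℂ (UEA (Ind m n) pI)),
      χ0 ⟨ST.inD (En m n ^ k) * ST.inU z, Submodule.subset_span ⟨k, z, hz, rfl⟩⟩ =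
        (MvPolynomial.X z0) ^ k * MvPolynomial.rename emb (χs ⟨z, hz⟩)) :
    ∀ (z : UEA (Ind (m+1) n) pI) (hz : z ∈ Subalgebra.center ℂ (UEA (Ind (m+1) n) pI)),
      ∃ h : φ z ∈ Zc ST,
        χ0 ⟨φ z, h⟩ =
          MvPolynomial.aeval
            (Sum.elim
              (Fin.cases (MvPolynomial.X z0 + χ0 ⟨R, hRZ⟩ + MvPolynomial.C ((m : ℂ) + 1))
                (fun k => MvPolynomial.X (Sum.inl k.succ) + χ0 ⟨R, hRZ⟩))
              (fun k => MvPolynomial.X (Sum.inr k) - χ0 ⟨R, hRZ⟩))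
            (χb ⟨z, hz⟩) := by
  intro z hz
  have hφz : φ z ∈ Zc ST := hφ.map_mem_Zc hR hz
  exact ⟨hφz, mvPolynomial_funext_of_mem (Set.infinite_range_of_injective Int.cast_injective) z0
    fun _ ⟨_, hx⟩ => eval_harishChandra_map hRZ hφ hχs hχb hχ0 ⟨z, hz⟩ hφz hx.symm⟩
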